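/- Let n ≥ 7 be an integer, let X = gcd(3(n−3)(2n−9), (n−7)(n−3)(2n−9), 12, 2n(n−7), 3(n−7)), and let Y be the natural number determined by X·Y = 3(n−3)(n−7)(2n−9). Then the Smith group of the adjacency matrix of the Johnson graph J(n,3) satisfies S(A_{n,3,3,2}) ≅ (ℤ/3(n−7)ℤ)^{C(n,2)−2n+1} ⊕ (ℤ/3(2n−9)(n−7)ℤ)^{n−2} ⊕ (ℤ/3ℤ)^{C(n,3)−2C(n,2)+n+1} ⊕ ℤ/Xℤ ⊕ ℤ/Yℤ, where ℤ/0ℤ is understood to be ℤ. -/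

import Mathlib

open scoped Classical

/-- The `k`-element subsets of `{1,…,n}`. -/
def ksubsets (n k : ℕ) : Finset (Finset ℕ) :=
  (Finset.Icc 1 n).powerset.filter fun A => A.card = k

/-- The subset intersection matrix `A_{n,kr,kc,ℓ}`; `A_{n,3,3,2}` is the adjacency
matrix of the Johnson graph `J(n,3)`. -/
noncomputable def interMat (n kr kc ℓ : ℕ) :
    Matrix ↥(ksubsets n kr) ↥(ksubsets n kc) ℤ :=
  Matrix.of fun A B => if ((A : Finset ℕ) ∩ (B : Finset ℕ)).card = ℓ then 1 else 0

/-- The Smith group of an integer matrix. -/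
abbrev SmithGroup {ρ γ : Type*} (M : Matrix ρ γ ℤ) : Type _ :=
  (γ → ℤ) ⧸ Submodule.span ℤ (Set.range fun r : ρ => M r)

/-!
Let `N` be the inclusion matrix of the pairs of points against the triples, so that the adjacency
matrix is `A = Nᵀ N - 3`, and let `f` send a function `y` on the pairs to the class of `y N` in the
Smith group `S`. Then `f (N z) = 3 [z]`, and a function on the pairs annihilated by `N` modulo `3`
is constant modulo `3`. These two facts determine the homomorphisms `S → ℤ/3`, the functions `y`
with `f y ∈ 3 S`, and the kernel of `f`. After two points are singled out, there are unimodular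
coordinates on the functions `y` in which `ker f` is given by independent divisibility conditions;
this presents `3 S` as `3 G`, with `G` the product of cyclic groups of the theorem. Finally, an
isomorphism `3 S ≃ 3 G` lifts to `S ≃ G` up to summands killed by `3`, and these agree because `S`
and `G` have equally many homomorphisms to `ℤ/3`.
-/

section PrimeMultiples

variable {p : ℕ} [Fact p.Prime] {N N' : Type*} [AddCommGroup N] [AddCommGroup N']

theorem isSemisimpleModule_int_of_prime_smul_eq_zero (h : ∀ x : N, (p : ℤ) • x = 0) :
    IsSemisimpleModule ℤ N := by
  have hmax : (Ideal.span {(p : ℤ)}).IsMaximal :=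
    PrincipalIdealRing.isMaximal_of_irreducible (Nat.prime_iff_prime_int.1 Fact.out).irreducible
  have htors : Module.IsTorsionBySet ℤ N (Ideal.span {(p : ℤ)} : Set ℤ) := by
    rw [← Module.isTorsionBySet_iff_is_torsion_by_span, Module.isTorsionBySet_singleton_iff]
    exact h
  let _ := Ideal.Quotient.field (Ideal.span {(p : ℤ)})
  let _ := htors.module
  exact htors.isSemisimpleModule_iff.1 inferInstance

theorem exists_isCompl_of_smul_mem_imp_eq_zero (K : Submodule ℤ N)
    (hK : ∀ x, (p : ℤ) • x ∈ K → (p : ℤ) • x = 0) : ∃ C, IsCompl K C := by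
  set P := LinearMap.range (LinearMap.lsmul ℤ N p)
  have hdisj : P ⊓ K = ⊥ := by
    rw [eq_bot_iff]
    rintro _ ⟨⟨x, rfl⟩, hx⟩
    exact hK x hx
  have : IsSemisimpleModule ℤ (N ⧸ P) := isSemisimpleModule_int_of_prime_smul_eq_zero (p := p) <| by
    rintro ⟨x⟩
    exact (Submodule.Quotient.mk_eq_zero P).2 ⟨x, rfl⟩
  have : ComplementedLattice (Set.Ici P) :=
    (Submodule.comapMkQRelIso P).complementedLattice_iff.1 inferInstance
  obtain ⟨⟨C, hPC⟩, hC⟩ := exists_isCompl (⟨P ⊔ K, Set.mem_Ici.2 le_sup_left⟩ : Set.Ici P)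
  have hinf : (P ⊔ K) ⊓ C = P := congrArg Subtype.val hC.inf_eq_bot
  have hsup : (P ⊔ K) ⊔ C = ⊤ := congrArg Subtype.val hC.sup_eq_top
  refine ⟨C, IsCompl.of_eq ?_ ?_⟩
  · rw [eq_bot_iff, ← hdisj]
    exact le_inf ((inf_le_inf_right C le_sup_right).trans hinf.le) inf_le_left
  · rwa [sup_right_comm, sup_eq_right.2 (Set.mem_Ici.1 hPC), sup_comm] at hsup

theorem exists_isCompl_of_forall_exists_smul_eq (Q : Submodule ℤ N)
    (hQ : ∀ y, ∃ q ∈ Q, (p : ℤ) • q = (p : ℤ) • y) :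
    ∃ C, IsCompl Q C ∧ ∀ y ∈ C, (p : ℤ) • y = 0 := by
  set T := Submodule.torsionBy ℤ N p
  have : IsSemisimpleModule ℤ T := isSemisimpleModule_int_of_prime_smul_eq_zero (p := p)
    (Submodule.smul_torsionBy (p : ℤ))
  have : ComplementedLattice (Set.Iic T) := T.mapIic.complementedLattice_iff.1 inferInstance
  obtain ⟨⟨C, hCT⟩, hC⟩ := exists_isCompl (⟨Q ⊓ T, Set.mem_Iic.2 inf_le_right⟩ : Set.Iic T)
  have hinf : (Q ⊓ T) ⊓ C = ⊥ := congrArg Subtype.val hC.inf_eq_bot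
  have hsup : (Q ⊓ T) ⊔ C = T := congrArg Subtype.val hC.sup_eq_top
  refine ⟨C, IsCompl.of_eq ?_ (top_unique fun y _ => ?_), fun y hy => hCT hy⟩
  · rwa [inf_assoc, inf_eq_right.2 (Set.mem_Iic.1 hCT)] at hinf
  · obtain ⟨q, hq, hqy⟩ := hQ y
    have hdiff : y - q ∈ T := (Submodule.mem_torsionBy_iff _ _).2 (by rw [smul_sub, hqy, sub_self])
    rw [← hsup] at hdiff
    simpa using add_mem (Submodule.mem_sup_left hq) (sup_le_sup_right inf_le_left C hdiff)

theorem card_hom_congr {G : Type*} [AddCommGroup G] (e : N ≃ₗ[ℤ] N') :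
    Nat.card (N →ₗ[ℤ] G) = Nat.card (N' →ₗ[ℤ] G) :=
  Nat.card_congr (e.congrLeft G ℤ).toEquiv

theorem card_hom_prod {G : Type*} [AddCommGroup G] :
    Nat.card (N × N' →ₗ[ℤ] G) = Nat.card (N →ₗ[ℤ] G) * Nat.card (N' →ₗ[ℤ] G) := by
  rw [← Nat.card_prod]
  exact Nat.card_congr (LinearMap.coprodEquiv ℤ).toEquiv.symm

theorem card_hom_pi {G ι : Type*} [AddCommGroup G] [Fintype ι] (A : ι → Type*)
    [∀ i, AddCommGroup (A i)] :
    Nat.card ((∀ i, A i) →ₗ[ℤ] G) = ∏ i, Nat.card (A i →ₗ[ℤ] G) := by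
  rw [← Nat.card_pi]
  exact Nat.card_congr (LinearMap.lsum ℤ A ℤ).toEquiv.symm

theorem card_hom_zmod {G : Type*} [AddCommGroup G] (d : ℕ) :
    Nat.card (ZMod d →ₗ[ℤ] G) = Nat.card {x : G // d • x = 0} := by
  refine Nat.card_congr (((addMonoidHomLequivInt ℤ).symm.toEquiv.trans (ZMod.lift d).symm).trans
    ((zmultiplesHom G).symm.subtypeEquiv fun f => ?_))
  rw [zmultiplesHom_symm_apply, ← map_nsmul, nsmul_one]

theorem card_hom_zmod_zmod (d : ℕ) :
    Nat.card (ZMod d →ₗ[ℤ] ZMod p) = if p ∣ d then p else 1 := by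
  have nsmul_eq_zero_iff (x : ZMod p) : d • x = 0 ↔ p ∣ d ∨ x = 0 := by
    rw [nsmul_eq_mul, mul_eq_zero, ZMod.natCast_eq_zero_iff]
  simp_rw [card_hom_zmod, nsmul_eq_zero_iff]
  split_ifs with h <;> simp [h]

theorem finite_hom_zmod [Module.Finite ℤ N] : Finite (N →ₗ[ℤ] ZMod p) := by
  obtain ⟨s, hs⟩ := (Module.Finite.fg_top : (⊤ : Submodule ℤ N).FG)
  refine Finite.of_injective (fun (f : N →ₗ[ℤ] ZMod p) (x : s) => f x) fun f g h => ?_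
  exact LinearMap.ext_on hs fun x hx => congrFun h ⟨x, hx⟩

theorem card_hom_eq_pow_finrank (p : ℕ) [Fact p.Prime] (N : Type*) [AddCommGroup N]
    [Module (ZMod p) N] [Module.Finite (ZMod p) N] :
    Nat.card (N →ₗ[ℤ] ZMod p) = p ^ Module.finrank (ZMod p) N := by
  calc Nat.card (N →ₗ[ℤ] ZMod p)
    _ = Nat.card (Module.Dual (ZMod p) N) :=
      Nat.card_congr ((addMonoidHomLequivInt ℤ).symm.toEquiv.trans
        (AddMonoidHom.toZModLinearMapEquiv p).toEquiv)
    _ = p ^ Module.finrank (ZMod p) N := by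
      rw [Module.natCard_eq_pow_finrank (K := ZMod p), Nat.card_zmod, Subspace.dual_finrank_eq]

theorem nonempty_linearEquiv_of_card_hom_eq [Module.Finite ℤ N] [Module.Finite ℤ N']
    (hN : ∀ x : N, (p : ℤ) • x = 0) (hN' : ∀ x : N', (p : ℤ) • x = 0)
    (h : Nat.card (N →ₗ[ℤ] ZMod p) = Nat.card (N' →ₗ[ℤ] ZMod p)) : Nonempty (N ≃ₗ[ℤ] N') := by
  obtain ⟨_⟩ : Nonempty (Module (ZMod p) N) :=
    ⟨AddCommGroup.zmodModule fun x => by simpa using hN x⟩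
  obtain ⟨_⟩ : Nonempty (Module (ZMod p) N') :=
    ⟨AddCommGroup.zmodModule fun x => by simpa using hN' x⟩
  have : Module.Finite (ZMod p) N := .of_restrictScalars_finite ℤ _ _
  have : Module.Finite (ZMod p) N' := .of_restrictScalars_finite ℤ _ _
  have hpow : p ^ Module.finrank (ZMod p) N = p ^ Module.finrank (ZMod p) N' := by
    rw [← card_hom_eq_pow_finrank p N, ← card_hom_eq_pow_finrank p N', h]
  exact ⟨(LinearEquiv.ofFinrankEq (R := ZMod p) N N'
    (Nat.pow_right_injective (Fact.out : p.Prime).two_le hpow)).toAddEquiv.toIntLinearEquiv⟩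

theorem exists_linearEquiv_pi_zmod (N : Type*) [AddCommGroup N] [Module.Finite ℤ N] :
    ∃ (ι : Type) (_ : Fintype ι) (d : ι → ℕ), Nonempty ((∀ i, ZMod (d i)) ≃ₗ[ℤ] N) := by
  have := Module.Finite.iff_addGroup_fg.1 ‹Module.Finite ℤ N›
  obtain ⟨r, κ, _, q, _, e, ⟨E⟩⟩ := AddCommGroup.equiv_free_prod_directSum_zmod N
  refine ⟨Fin r ⊕ κ, inferInstance, Sum.elim 0 fun j => q j ^ e j, ⟨?_⟩⟩
  exact (LinearEquiv.sumPiEquivProdPi ℤ (Fin r) κ _).trans (E.toIntLinearEquiv.trans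
    ((Finsupp.linearEquivFunOnFinite ℤ ℤ (Fin r)).prodCongr
      (DirectSum.linearEquivFunOnFintype ℤ κ _))).symm

theorem exists_smul_eq_of_zmod (d : ℕ) (ψ : ZMod d →ₗ[ℤ] N)
    (hker : ∀ x, (p : ℤ) • x = 0 → ψ x = 0) (hrange : ∀ x, ∃ y, (p : ℤ) • y = ψ x) :
    ∃ g : ZMod d →ₗ[ℤ] N, (p : ℤ) • g = ψ := by
  suffices ∃ y : N, d • y = 0 ∧ (p : ℤ) • y = ψ 1 by
    obtain ⟨y, hdy, hpy⟩ := this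
    refine ⟨(ZMod.lift d ⟨zmultiplesHom N y, by simpa using hdy⟩).toIntLinearMap, ?_⟩
    ext x
    obtain ⟨x, rfl⟩ := ZMod.intCast_surjective x
    have hψ : ψ x = x • ψ 1 := by rw [← map_zsmul, zsmul_one]
    rw [hψ, ← hpy, smul_comm, LinearMap.smul_apply, AddMonoidHom.coe_toIntLinearMap, ZMod.lift_coe,
      zmultiplesHom_apply]
  have hψd : (d : ℤ) • ψ 1 = 0 := by rw [← map_zsmul]; simp
  by_cases hpd : p ∣ d
  · obtain ⟨y, hy⟩ := hrange 1
    obtain ⟨c, rfl⟩ := hpd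
    refine ⟨y, ?_, hy⟩
    have hψc : ψ c = 0 := hker _ (by rw [zsmul_eq_mul]; exact_mod_cast ZMod.natCast_self _)
    rw [mul_comm, mul_smul, ← natCast_zsmul y p, hy, ← map_nsmul, nsmul_one, hψc]
  · obtain ⟨a, b, hab⟩ : IsCoprime (p : ℤ) d :=
      Nat.isCoprime_iff_coprime.2 (((Fact.out : p.Prime).coprime_iff_not_dvd).2 hpd)
    refine ⟨a • ψ 1, ?_, ?_⟩
    · rw [← natCast_zsmul, smul_comm, hψd, smul_zero]
    · calc (p : ℤ) • a • ψ 1 = (a * p + b * d) • ψ 1 - b • (d : ℤ) • ψ 1 := by module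
        _ = ψ 1 := by rw [hab, hψd, smul_zero, one_smul, sub_zero]

theorem exists_smul_eq_of_torsion_le_ker [Module.Finite ℤ N] (ψ : N →ₗ[ℤ] N')
    (hker : ∀ x, (p : ℤ) • x = 0 → ψ x = 0) (hrange : ∀ x, ∃ y, (p : ℤ) • y = ψ x) :
    ∃ g : N →ₗ[ℤ] N', (p : ℤ) • g = ψ := by
  obtain ⟨ι, _, d, ⟨E⟩⟩ := exists_linearEquiv_pi_zmod N
  have (i : ι) : ∃ g : ZMod (d i) →ₗ[ℤ] N', (p : ℤ) • g = ψ ∘ₗ E ∘ₗ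
      LinearMap.single ℤ (fun i => ZMod (d i)) i := by
    refine exists_smul_eq_of_zmod (d i) _ (fun x hx => hker _ ?_) fun x => hrange _
    rw [← map_smul, hx, map_zero]
  choose g hg using this
  refine ⟨LinearMap.lsum ℤ _ ℤ g ∘ₗ E.symm, ?_⟩
  have hg' : (p : ℤ) • g = (LinearMap.lsum ℤ _ ℤ).symm (ψ ∘ₗ E) := funext hg
  rw [← LinearMap.smul_comp, ← map_smul, hg', LinearEquiv.apply_symm_apply, LinearMap.comp_assoc,
    LinearEquiv.comp_symm, LinearMap.comp_id]

theorem nonempty_linearEquiv_of_smul_ker_range [Module.Finite ℤ N] [Module.Finite ℤ N']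
    (ψ : N →ₗ[ℤ] N') (hker : ∀ x, ψ x = 0 ↔ (p : ℤ) • x = 0)
    (hrange : LinearMap.range ψ = LinearMap.range (LinearMap.lsmul ℤ N' p))
    (hcard : Nat.card (N →ₗ[ℤ] ZMod p) = Nat.card (N' →ₗ[ℤ] ZMod p)) : Nonempty (N ≃ₗ[ℤ] N') := by
  obtain ⟨g, rfl⟩ := exists_smul_eq_of_torsion_le_ker ψ (fun x => (hker x).2) fun x => by
    simpa using hrange.le ⟨x, rfl⟩
  simp only [LinearMap.smul_apply] at hker
  have smul_eq_zero_of_mem_ker {x} (hx : x ∈ LinearMap.ker g) : (p : ℤ) • x = 0 :=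
    (hker x).1 (by rw [LinearMap.mem_ker.1 hx, smul_zero])
  obtain ⟨C, hC⟩ := exists_isCompl_of_smul_mem_imp_eq_zero (p := p) (LinearMap.ker g) fun x hx =>
    (hker x).1 (by rw [← map_smul, LinearMap.mem_ker.1 hx])
  obtain ⟨C', hC', smul_eq_zero_of_mem_C'⟩ :=
    exists_isCompl_of_forall_exists_smul_eq (p := p) (LinearMap.range g) fun y => by
      obtain ⟨x, hx⟩ := hrange.ge ⟨y, rfl⟩
      exact ⟨g x, ⟨x, rfl⟩, hx⟩
  have E : N ≃ₗ[ℤ] LinearMap.range g × LinearMap.ker g :=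
    (Submodule.prodEquivOfIsCompl _ _ hC.symm).symm.trans
      (((Submodule.quotientEquivOfIsCompl _ _ hC).symm.trans g.quotKerEquivRange).prodCongr
        (LinearEquiv.refl ℤ _))
  have E' := (Submodule.prodEquivOfIsCompl _ _ hC').symm
  rw [card_hom_congr E, card_hom_congr E', card_hom_prod, card_hom_prod] at hcard
  have : Finite (LinearMap.range g →ₗ[ℤ] ZMod p) := finite_hom_zmod
  obtain ⟨e⟩ := nonempty_linearEquiv_of_card_hom_eq (p := p)
    (fun x => Subtype.ext (smul_eq_zero_of_mem_ker x.2))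
    (fun x => Subtype.ext (smul_eq_zero_of_mem_C' x x.2))
    (Nat.eq_of_mul_eq_mul_left Nat.card_pos hcard)
  exact ⟨E.trans (((LinearEquiv.refl ℤ _).prodCongr e).trans E'.symm)⟩

theorem nonempty_linearEquiv_of_ker_eq_ker [Module.Finite ℤ N] [Module.Finite ℤ N']
    {L : Type*} [AddCommGroup L] (f : L →ₗ[ℤ] N) (f' : L →ₗ[ℤ] N')
    (hf : LinearMap.range f = LinearMap.range (LinearMap.lsmul ℤ N p))
    (hf' : LinearMap.range f' = LinearMap.range (LinearMap.lsmul ℤ N' p))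
    (hker : LinearMap.ker f = LinearMap.ker f')
    (hcard : Nat.card (N →ₗ[ℤ] ZMod p) = Nat.card (N' →ₗ[ℤ] ZMod p)) : Nonempty (N ≃ₗ[ℤ] N') := by
  let φ : LinearMap.range f ≃ₗ[ℤ] LinearMap.range f' := f.quotKerEquivRange.symm.trans
    ((Submodule.quotEquivOfEq _ _ hker).trans f'.quotKerEquivRange)
  let smulN : N →ₗ[ℤ] LinearMap.range f :=
    (LinearMap.lsmul ℤ N p).codRestrict _ fun x => hf ▸ ⟨x, rfl⟩
  refine nonempty_linearEquiv_of_smul_ker_range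
    ((LinearMap.range f').subtype ∘ₗ φ ∘ₗ smulN) (fun x => ?_) ?_ hcard
  · simp [smulN, ← Subtype.coe_inj]
  · have hsmulN : LinearMap.range smulN = ⊤ :=
      LinearMap.range_eq_top.2 fun ⟨y, hy⟩ => (hf ▸ hy).imp fun x hx => Subtype.ext hx
    rw [LinearMap.range_comp, LinearMap.range_comp, hsmulN, Submodule.map_top,
      LinearEquiv.range, Submodule.map_top, Submodule.range_subtype, hf']

theorem exists_smul_eq_of_forall_hom_eq_zero {x : N} (hx : ∀ φ : N →ₗ[ℤ] ZMod p, φ x = 0) :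
    ∃ y, (p : ℤ) • y = x := by
  let P := LinearMap.range (LinearMap.lsmul ℤ N p)
  obtain ⟨_⟩ : Nonempty (Module (ZMod p) (N ⧸ P)) :=
    ⟨AddCommGroup.zmodModule <| Submodule.Quotient.mk_surjective P |>.forall.2 fun y =>
      (Submodule.Quotient.mk_eq_zero P).2 ⟨y, by simp⟩⟩
  suffices (Submodule.Quotient.mk x : N ⧸ P) = 0 from (Submodule.Quotient.mk_eq_zero P).1 this
  refine (Module.forall_dual_apply_eq_zero_iff (ZMod p) _).1 fun φ => ?_
  exact hx (φ.toAddMonoidHom.toIntLinearMap ∘ₗ P.mkQ)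

end PrimeMultiples

section Rank

open Module

variable {K : Type*} [Field K]

theorem finrank_comap_eq {E F : Type*} [AddCommGroup E] [Module K E] [FiniteDimensional K E]
    [AddCommGroup F] [Module K F] (f : E →ₗ[K] F) (P : Submodule K F) :
    finrank K (P.comap f) =
      finrank K (LinearMap.ker f) + finrank K (LinearMap.range f ⊓ P : Submodule K F) := by
  rw [← LinearMap.finrank_range_add_finrank_ker (f.domRestrict (P.comap f)), add_comm,
    LinearMap.range_domRestrict, Submodule.map_comap_eq, LinearMap.ker_domRestrict]
  congr 1
  exact (Submodule.submoduleOfEquivOfLe (LinearMap.ker_le_comap f)).finrank_eq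

theorem finrank_ker_mulVecLin_add_card {m n : Type*} [Fintype m] [Fintype n] (A : Matrix m n K) :
    finrank K (LinearMap.ker A.mulVecLin) + Fintype.card m =
      finrank K (LinearMap.ker A.vecMulLinear) + Fintype.card n := by
  have h := LinearMap.finrank_range_add_finrank_ker A.mulVecLin
  have h' := LinearMap.finrank_range_add_finrank_ker A.vecMulLinear
  have hrank := A.rank_transpose
  rw [Matrix.rank, Matrix.mulVecLin_transpose, Matrix.rank] at hrank
  rw [finrank_fintype_fun_eq_card] at h h'
  lia

end Rank

section SmithGroup

open Matrix

variable {ρ γ : Type*} (M : Matrix ρ γ ℤ)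

theorem smithGroup_mk_eq_zero_iff [Fintype ρ] {x : γ → ℤ} :
    (Submodule.Quotient.mk x : SmithGroup M) = 0 ↔ ∃ z, z ᵥ* M = x := by
  rw [Submodule.Quotient.mk_eq_zero]
  exact (SetLike.ext_iff.1 (range_vecMulLinear M) x).symm

theorem nonempty_smithGroup_reindex_linearEquiv {ρ' γ' : Type*} (e₁ : ρ ≃ ρ') (e₂ : γ ≃ γ') :
    Nonempty (SmithGroup (M.reindex e₁ e₂) ≃ₗ[ℤ] SmithGroup M) := by
  refine ⟨Submodule.Quotient.equiv _ _ (LinearEquiv.funCongrLeft ℤ ℤ e₂) ?_⟩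
  rw [Submodule.map_span, ← Set.range_comp, ← e₁.surjective.range_comp]
  congr 2
  ext r c
  simp [LinearMap.funLeft]

theorem hom_smithGroup_apply_mk [Fintype γ] {R : Type*} [Ring R] (φ : SmithGroup M →ₗ[ℤ] R)
    (x : γ → ℤ) :
    φ (Submodule.Quotient.mk x) =
      ∑ c, (x c : R) * φ (Submodule.Quotient.mk (Pi.single c 1)) := by
  conv_lhs => rw [← (Pi.basisFun ℤ γ).sum_repr x, ← Submodule.mkQ_apply]
  simp_rw [map_sum, map_zsmul, Pi.basisFun_repr, Pi.basisFun_apply, Submodule.mkQ_apply,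
    zsmul_eq_mul]

/-- Homomorphisms from the Smith group of `M` to `R`, as the kernel of `M` acting on vectors
with entries in `R`. -/
noncomputable def smithGroupHomEquiv [Fintype γ] (R : Type*) [Ring R] :
    (SmithGroup M →ₗ[ℤ] R) ≃ {g : γ → R // M.map Int.cast *ᵥ g = 0} where
  toFun φ := ⟨fun c => φ (Submodule.Quotient.mk (Pi.single c 1)), by
    ext r
    have hrow : (Submodule.Quotient.mk (M r) : SmithGroup M) = 0 :=
      (Submodule.Quotient.mk_eq_zero _).2 (Submodule.subset_span ⟨r, rfl⟩)
    exact (hom_smithGroup_apply_mk M φ (M r)).symm.trans (by rw [hrow, map_zero, Pi.zero_apply])⟩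
  invFun g := Submodule.liftQ _ ((Pi.basisFun ℤ γ).constr ℤ g.1) <| Submodule.span_le.2 <| by
    rintro _ ⟨r, rfl⟩
    rw [SetLike.mem_coe, LinearMap.mem_ker, Module.Basis.constr_apply_fintype]
    simpa [zsmul_eq_mul, mulVec, dotProduct] using congrFun g.2 r
  left_inv φ := by
    refine Submodule.linearMap_qext _ ((Pi.basisFun ℤ γ).ext fun c => ?_)
    simp [Module.Basis.constr_apply_fintype, Pi.single_apply]
  right_inv g := by
    ext c
    simp [Module.Basis.constr_apply_fintype, Pi.single_apply]

end SmithGroup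

section InclusionMatrix

open Finset Matrix

variable {V : Type*} [Fintype V] {R : Type*}

theorem card_powersetCard_coe (k : ℕ) :
    Fintype.card (Set.powersetCard V k) = (Fintype.card V).choose k := by
  rw [← Nat.card_eq_fintype_card, Set.powersetCard.card, Nat.card_eq_fintype_card]

theorem nonempty_powersetCard {k : ℕ} (hk : k ≤ Fintype.card V) :
    Nonempty (Set.powersetCard V k) := by
  obtain ⟨S, -, hS⟩ := exists_subset_card_eq (s := (univ : Finset V)) (n := k) hk
  exact ⟨S, hS⟩

theorem card_filter_coe_subset (k : ℕ) (T : Finset V) :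
    #{S : Set.powersetCard V k | (S : Finset V) ⊆ T} = (#T).choose k := by
  rw [← card_powersetCard, ← card_map (Function.Embedding.subtype _)]
  congr 1
  ext S
  simp [mem_powersetCard, and_comm]

theorem card_filter_subset_coe (k : ℕ) (U : Finset V) :
    #{T : Set.powersetCard V k | U ⊆ (T : Finset V)} =
      if #U ≤ k then (Fintype.card V - #U).choose (k - #U) else 0 := by
  split_ifs with h
  · rw [← card_univ, ← card_filter_powersetCard_subset U univ k (subset_univ U) h,
      ← card_map (Function.Embedding.subtype _)]
    congr 1
    ext S
    simp [mem_powersetCard, and_comm]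
  · exact card_eq_zero.2 (filter_eq_empty_iff.2 fun T _ hT =>
      h (Set.powersetCard.card_eq T ▸ card_le_card hT))

/-- The inclusion matrix of the `j`-subsets against the `k`-subsets of `V`. -/
noncomputable def inclusionMatrix (R V : Type*) [Zero R] [One R] (j k : ℕ) :
    Matrix (Set.powersetCard V j) (Set.powersetCard V k) R :=
  of fun S T => if (S : Finset V) ⊆ T then 1 else 0

theorem transpose_mul_inclusionMatrix_apply [NonAssocSemiring R] (j k : ℕ)
    (T T' : Set.powersetCard V k) :
    ((inclusionMatrix R V j k)ᵀ * inclusionMatrix R V j k) T T' =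
      (#((T : Finset V) ∩ T')).choose j := by
  rw [← card_filter_coe_subset, ← sum_boole]
  simp_rw [inclusionMatrix, mul_apply, transpose_apply, of_apply, ite_zero_mul_ite_zero, mul_one,
    subset_inter_iff]

theorem inclusionMatrix_mul_transpose_apply [NonAssocSemiring R] (j k : ℕ)
    (S S' : Set.powersetCard V j) :
    (inclusionMatrix R V j k * (inclusionMatrix R V j k)ᵀ) S S' =
      #{T : Set.powersetCard V k | (S ∪ S' : Finset V) ⊆ T} := by
  rw [← sum_boole]
  simp_rw [inclusionMatrix, mul_apply, transpose_apply, of_apply, ite_zero_mul_ite_zero, mul_one,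
    union_subset_iff]

theorem one_vecMul_inclusionMatrix [NonAssocSemiring R] (j k : ℕ) :
    1 ᵥ* inclusionMatrix R V j k = fun _ => (k.choose j : R) := by
  ext T
  simp_rw [vecMul, one_dotProduct, inclusionMatrix, of_apply, sum_boole, card_filter_coe_subset,
    Set.powersetCard.card_eq]

theorem inclusionMatrix_mulVec_one [NonAssocSemiring R] {j k : ℕ} (hjk : j ≤ k) :
    inclusionMatrix R V j k *ᵥ 1 = fun _ => ((Fintype.card V - j).choose (k - j) : R) := by
  ext S
  simp_rw [mulVec, dotProduct_one, inclusionMatrix, of_apply, sum_boole, card_filter_subset_coe,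
    Set.powersetCard.card_eq, if_pos hjk]

theorem sum_inclusionMatrix_mulVec [CommSemiring R] (j k : ℕ) (z : Set.powersetCard V k → R) :
    ∑ S, (inclusionMatrix R V j k *ᵥ z) S = k.choose j * ∑ T, z T := by
  rw [← one_dotProduct, dotProduct_mulVec, one_vecMul_inclusionMatrix, dotProduct, mul_sum]

/-- The sum of the values of `y` on the pairs containing `a`. -/
noncomputable def pairDegree [AddCommMonoid R] (y : Set.powersetCard V 2 → R) (a : V) : R :=
  ∑ S : Set.powersetCard V 2, if a ∈ (S : Finset V) then y S else 0

theorem sum_pairDegree_mem [Semiring R] (y : Set.powersetCard V 2 → R) (U : Finset V) :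
    ∑ a ∈ U, pairDegree y a = ∑ S : Set.powersetCard V 2, #(U ∩ S) * y S := by
  simp_rw [pairDegree]
  rw [sum_comm]
  simp_rw [← sum_filter, sum_const, nsmul_eq_mul, filter_mem_eq_inter]

theorem sum_pairDegree [Semiring R] (y : Set.powersetCard V 2 → R) :
    ∑ a, pairDegree y a = 2 * ∑ S, y S := by
  simp_rw [sum_pairDegree_mem, univ_inter, Set.powersetCard.card_eq, mul_sum, Nat.cast_ofNat]

theorem inclusionMatrix_two_three_mul_transpose_apply (hV : 3 ≤ Fintype.card V)
    (S S' : Set.powersetCard V 2) :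
    (inclusionMatrix ℤ V 2 3 * (inclusionMatrix ℤ V 2 3)ᵀ) S S' =
      (Fintype.card V - 4) * (if S = S' then 1 else 0) + #(S ∩ S' : Finset V) := by
  rw [inclusionMatrix_mul_transpose_apply, card_filter_subset_coe]
  have hcard := card_union_add_card_inter (S : Finset V) S'
  simp only [Set.powersetCard.card_eq] at hcard
  by_cases hSS' : S = S'
  · subst hSS'
    rw [union_self, inter_self, Set.powersetCard.card_eq, if_pos (by lia), if_pos rfl,
      Nat.choose_one_right]
    push_cast [Nat.cast_sub (show 2 ≤ Fintype.card V by lia)]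
    ring
  · have hinter : #(S ∩ S' : Finset V) < 2 := by
      refine ((card_le_card inter_subset_left).trans_eq (Set.powersetCard.card_eq S)).lt_of_ne
        fun h => hSS' (Set.powersetCard.eq_iff_subset.2 (inter_eq_left.1 ?_))
      exact eq_of_subset_of_card_le inter_subset_left (by rw [h, Set.powersetCard.card_eq])
    rw [if_neg hSS', mul_zero, zero_add]
    obtain ⟨hi, hu⟩ | ⟨hi, hu⟩ : (#(S ∩ S' : Finset V) = 0 ∧ #(S ∪ S' : Finset V) = 4) ∨
        (#(S ∩ S' : Finset V) = 1 ∧ #(S ∪ S' : Finset V) = 3) := by lia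
    all_goals simp [hi, hu]

theorem inclusionMatrix_mulVec_vecMul (hV : 3 ≤ Fintype.card V) (y : Set.powersetCard V 2 → ℤ) :
    inclusionMatrix ℤ V 2 3 *ᵥ (y ᵥ* inclusionMatrix ℤ V 2 3) = fun S =>
      (Fintype.card V - 4) * y S + ∑ a ∈ (S : Finset V), pairDegree y a := by
  ext S
  rw [← mulVec_transpose, mulVec_mulVec, mulVec, dotProduct, sum_pairDegree_mem]
  simp_rw [inclusionMatrix_two_three_mul_transpose_apply hV, add_mul, sum_add_distrib, mul_assoc,
    ← mul_sum, ite_mul, one_mul, zero_mul, sum_ite_eq, mem_univ, if_true]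

theorem vecMul_inclusionMatrix_apply [NonAssocSemiring R] {j k : ℕ} (f : Finset V → R)
    (T : Set.powersetCard V k) :
    ((fun S : Set.powersetCard V j => f S) ᵥ* inclusionMatrix R V j k) T =
      ∑ S ∈ (T : Finset V).powersetCard j, f S := by
  simp_rw [vecMul, dotProduct, inclusionMatrix, of_apply, mul_ite, mul_one, mul_zero]
  rw [← sum_filter]
  exact sum_bij (fun S _ => S) (by simp [mem_powersetCard]) (by simp)
    (by simp [mem_powersetCard]) (by simp)

theorem sum_powersetCard_succ_insert {α M : Type*} [AddCommMonoid M] (f : Finset α → M) (k : ℕ)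
    {a : α} {s : Finset α} (ha : a ∉ s) :
    ∑ S ∈ powersetCard (k + 1) (insert a s), f S =
      ∑ S ∈ powersetCard (k + 1) s, f S + ∑ S ∈ powersetCard k s, f (insert a S) := by
  have notMem {m : ℕ} {S : Finset α} (hS : S ∈ powersetCard m s) : a ∉ S :=
    fun h => ha ((mem_powersetCard.1 hS).1 h)
  rw [← Nat.succ_eq_add_one, powersetCard_succ_insert ha, sum_union, sum_image]
  · intro S hS S' hS' h
    rw [← erase_insert (notMem hS), ← erase_insert (notMem hS'), h]
  · refine disjoint_left.2 fun S hS hS' => notMem hS ?_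
    obtain ⟨Q, -, rfl⟩ := mem_image.1 hS'
    exact mem_insert_self a Q

theorem sum_powersetCard_two_triple {α M : Type*} [AddCommMonoid M] (f : Finset α → M) {a b c : α}
    (hab : a ≠ b) (hac : a ≠ c) (hbc : b ≠ c) :
    ∑ S ∈ powersetCard 2 {a, b, c}, f S = f {a, b} + f {a, c} + f {b, c} := by
  have hpair : powersetCard 2 {b, c} = ({{b, c}} : Finset (Finset α)) := by
    rw [← card_pair hbc, powersetCard_self]
  rw [sum_powersetCard_succ_insert f 1 (by simp [hab, hac]), hpair, sum_singleton,
    powersetCard_one, sum_map, sum_pair hbc, add_comm]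
  rfl

theorem apply_eq_of_vecMul_inclusionMatrix_eq_zero [CommRing R] [IsDomain R] (h2 : (2 : R) ≠ 0)
    (hV : 6 ≤ Fintype.card V) {v : Set.powersetCard V 2 → R}
    (hv : v ᵥ* inclusionMatrix R V 2 3 = 0) (S S' : Set.powersetCard V 2) : v S = v S' := by
  obtain ⟨f, rfl⟩ : ∃ f : Finset V → R, v = fun S : Set.powersetCard V 2 => f S :=
    ⟨Function.extend Subtype.val v 0, (Function.extend_comp Subtype.val_injective v 0).symm⟩
  have triangle {a b c : V} (hab : a ≠ b) (hac : a ≠ c) (hbc : b ≠ c) :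
      f {a, b} + f {a, c} + f {b, c} = 0 := by
    have h := congrFun hv ⟨{a, b, c}, card_eq_three.2 ⟨a, b, c, hab, hac, hbc, rfl⟩⟩
    rwa [vecMul_inclusionMatrix_apply, sum_powersetCard_two_triple f hab hac hbc] at h
  have disjoint_eq {S S' : Set.powersetCard V 2} (h : Disjoint (S : Finset V) S') :
      f S = f S' := by
    obtain ⟨a, b, hab, hS⟩ := card_eq_two.1 (Set.powersetCard.card_eq S)
    obtain ⟨c, d, hcd, hS'⟩ := card_eq_two.1 (Set.powersetCard.card_eq S')
    rw [hS, hS'] at h ⊢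
    simp only [disjoint_insert_left, disjoint_singleton_left, mem_insert, mem_singleton, not_or]
      at h
    refine mul_left_cancel₀ h2 ?_
    linear_combination triangle hab h.1.1 h.2.1 + triangle hab h.1.2 h.2.2
      - triangle h.1.1 h.1.2 hcd - triangle h.2.1 h.2.2 hcd
  obtain ⟨Q, hQ, hQ2⟩ := exists_subset_card_eq (s := (S ∪ S' : Finset V)ᶜ) (n := 2) <| by
    have := card_union_le (S : Finset V) S'
    simp only [Set.powersetCard.card_eq] at this
    rw [card_compl]
    lia
  have hQ' := disjoint_compl_right.mono_right hQ
  rw [disjoint_union_left] at hQ'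
  exact (disjoint_eq (S' := ⟨Q, hQ2⟩) hQ'.1).trans (disjoint_eq (S' := ⟨Q, hQ2⟩) hQ'.2).symm

end InclusionMatrix

section JohnsonMatrix

open Finset Matrix

theorem map_inclusionMatrix {R S : Type*} [Semiring R] [Semiring S] (f : R →+* S)
    (V : Type*) (j k : ℕ) :
    (inclusionMatrix R V j k).map f = inclusionMatrix S V j k := by
  ext S T
  simp [inclusionMatrix, apply_ite f]

variable {V : Type*} [Fintype V]

/-- The adjacency matrix of the Johnson graph on the `3`-subsets of `V`. -/
noncomputable def johnsonMatrix (V : Type*) :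
    Matrix (Set.powersetCard V 3) (Set.powersetCard V 3) ℤ :=
  of fun T T' => if #((T : Finset V) ∩ T') = 2 then 1 else 0

theorem johnsonMatrix_eq_transpose_mul_sub :
    johnsonMatrix V =
      (inclusionMatrix ℤ V 2 3)ᵀ * inclusionMatrix ℤ V 2 3 - (3 : ℤ) • 1 := by
  ext T T'
  rw [Matrix.sub_apply, transpose_mul_inclusionMatrix_apply, johnsonMatrix, of_apply,
    Matrix.smul_apply]
  have hle : #((T : Finset V) ∩ T') ≤ 3 :=
    (card_le_card inter_subset_left).trans_eq (Set.powersetCard.card_eq T)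
  by_cases hTT' : T = T'
  · subst hTT'
    simp [Set.powersetCard.card_eq]
  · have hne : #((T : Finset V) ∩ T') ≠ 3 := fun h =>
      hTT' <| Set.powersetCard.eq_iff_subset.2 <| inter_eq_left.1 <|
        eq_of_subset_of_card_le inter_subset_left (by rw [h, Set.powersetCard.card_eq])
    rw [one_apply_ne hTT']
    interval_cases #((T : Finset V) ∩ T') <;> simp_all

theorem vecMul_johnsonMatrix (z : Set.powersetCard V 3 → ℤ) :
    z ᵥ* johnsonMatrix V =
      (inclusionMatrix ℤ V 2 3 *ᵥ z) ᵥ* inclusionMatrix ℤ V 2 3 - (3 : ℤ) • z := by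
  rw [johnsonMatrix_eq_transpose_mul_sub, vecMul_sub, vecMul_smul, vecMul_one, ← vecMul_vecMul,
    vecMul_transpose]

theorem nonempty_smithGroup_interMat_linearEquiv {n : ℕ} (hV : Fintype.card V = n) :
    Nonempty (SmithGroup (interMat n 3 3 2) ≃ₗ[ℤ] SmithGroup (johnsonMatrix V)) := by
  obtain ⟨σ⟩ : Nonempty (V ≃ Finset.Icc 1 n) := ⟨Fintype.equivOfCardEq (by simp [hV])⟩
  let f : V ↪ ℕ := σ.toEmbedding.trans (Function.Embedding.subtype _)
  have hf : univ.map f = Finset.Icc 1 n := by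
    rw [← Finset.map_map, map_univ_equiv, univ_eq_attach, attach_map_val]
  have mem_ksubsets (T : Set.powersetCard V 3) : (T : Finset V).map f ∈ ksubsets n 3 := by
    rw [ksubsets, mem_filter, mem_powerset, card_map, ← hf]
    exact ⟨map_subset_map.2 (subset_univ _), Set.powersetCard.card_eq T⟩
  let e : Set.powersetCard V 3 ≃ ksubsets n 3 := Equiv.ofBijective
    (fun T => ⟨(T : Finset V).map f, mem_ksubsets T⟩) <| by
      refine ⟨fun T T' h => Subtype.ext (map_injective f (congrArg Subtype.val h)), ?_⟩
      rintro ⟨A, hA⟩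
      rw [ksubsets, mem_filter, mem_powerset, ← hf, subset_map_iff] at hA
      obtain ⟨⟨T, -, rfl⟩, hT⟩ := hA
      exact ⟨⟨T, by rwa [card_map] at hT⟩, rfl⟩
  have hinter : (johnsonMatrix V).reindex e e = interMat n 3 3 2 := by
    ext A B
    obtain ⟨T, rfl⟩ := e.surjective A
    obtain ⟨T', rfl⟩ := e.surjective B
    have hcard : #((T : Finset V) ∩ T') = #((e T : Finset ℕ) ∩ e T') := by
      rw [← card_map f, map_inter]
      rfl
    rw [Matrix.reindex_apply, submatrix_apply, e.symm_apply_apply, e.symm_apply_apply,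
      johnsonMatrix, interMat, of_apply, of_apply, hcard]
  rw [← hinter]
  exact nonempty_smithGroup_reindex_linearEquiv _ e e

theorem exists_eq_smul_add_const {p : ℕ} [Fact p.Prime] (hp : p ≠ 2) (hV : 6 ≤ Fintype.card V)
    {v : Set.powersetCard V 2 → ℤ} (hv : ∀ T, (p : ℤ) ∣ (v ᵥ* inclusionMatrix ℤ V 2 3) T) :
    ∃ (w : Set.powersetCard V 2 → ℤ) (c : ℤ), v = (p : ℤ) • w + c • 1 := by
  have h2 : (2 : ZMod p) ≠ 0 := by
    rw [← Nat.cast_ofNat, Ne, ZMod.natCast_eq_zero_iff]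
    exact fun h => hp ((Nat.prime_dvd_prime_iff_eq Fact.out Nat.prime_two).1 h)
  have hzero : (Int.cast ∘ v) ᵥ* inclusionMatrix (ZMod p) V 2 3 = 0 := by
    ext T
    have h := RingHom.map_vecMul (Int.castRingHom (ZMod p)) (inclusionMatrix ℤ V 2 3) v T
    rw [map_inclusionMatrix, eq_intCast, (ZMod.intCast_zmod_eq_zero_iff_dvd _ p).2 (hv T)] at h
    exact h.symm
  obtain ⟨S₀⟩ : Nonempty (Set.powersetCard V 2) := nonempty_powersetCard (by lia)
  have hdvd (S) : (p : ℤ) ∣ v S - v S₀ := by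
    rw [← ZMod.intCast_zmod_eq_zero_iff_dvd, Int.cast_sub, sub_eq_zero]
    exact apply_eq_of_vecMul_inclusionMatrix_eq_zero h2 hV hzero S S₀
  choose w hw using hdvd
  exact ⟨w, v S₀, funext fun S => by simpa using eq_add_of_sub_eq (hw S)⟩

/-- The map sending a function on the pairs of `V` to the class, in the Smith group of the
Johnson graph, of the function whose value at a triple is the sum over the pairs it contains. -/
noncomputable def pairMap (V : Type*) [Fintype V] :
    (Set.powersetCard V 2 → ℤ) →ₗ[ℤ] SmithGroup (johnsonMatrix V) :=
  Submodule.mkQ _ ∘ₗ (inclusionMatrix ℤ V 2 3).vecMulLinear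

theorem pairMap_apply (y : Set.powersetCard V 2 → ℤ) :
    pairMap V y = Submodule.Quotient.mk (y ᵥ* inclusionMatrix ℤ V 2 3) := rfl

theorem pairMap_inclusionMatrix_mulVec (z : Set.powersetCard V 3 → ℤ) :
    pairMap V (inclusionMatrix ℤ V 2 3 *ᵥ z) = (3 : ℤ) • Submodule.Quotient.mk z := by
  rw [pairMap_apply, ← Submodule.Quotient.mk_smul, ← sub_eq_zero, ← Submodule.Quotient.mk_sub,
    ← vecMul_johnsonMatrix]
  exact (smithGroup_mk_eq_zero_iff _).2 ⟨z, rfl⟩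

theorem inclusionMatrix_mulVec_vecMul_add_smul_one (hV : 3 ≤ Fintype.card V)
    (w : Set.powersetCard V 2 → ℤ) (c : ℤ) (S : Set.powersetCard V 2) :
    (inclusionMatrix ℤ V 2 3 *ᵥ (w ᵥ* inclusionMatrix ℤ V 2 3 + c • 1)) S =
      (Fintype.card V - 4) * w S + ∑ a ∈ (S : Finset V), pairDegree w a +
        c * (Fintype.card V - 2) := by
  rw [mulVec_add, inclusionMatrix_mulVec_vecMul hV, mulVec_smul,
    inclusionMatrix_mulVec_one (by lia)]
  simp [Nat.cast_sub (show 2 ≤ Fintype.card V by lia)]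

theorem pairMap_eq_zero_iff (hV : 6 ≤ Fintype.card V) {y : Set.powersetCard V 2 → ℤ} :
    pairMap V y = 0 ↔ ∃ (w : Set.powersetCard V 2 → ℤ) (c : ℤ), ∀ S,
      y S = (Fintype.card V - 7) * w S + ∑ a ∈ (S : Finset V), pairDegree w a +
        c * (Fintype.card V - 3) := by
  have one_vecMul : (1 : Set.powersetCard V 2 → ℤ) ᵥ* inclusionMatrix ℤ V 2 3 = (3 : ℤ) • 1 := by
    rw [one_vecMul_inclusionMatrix]
    ext T
    simp
  rw [pairMap_apply, smithGroup_mk_eq_zero_iff]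
  simp only [vecMul_johnsonMatrix]
  constructor
  · rintro ⟨z, hz⟩
    have hdiff : (inclusionMatrix ℤ V 2 3 *ᵥ z - y) ᵥ* inclusionMatrix ℤ V 2 3 = (3 : ℤ) • z := by
      rw [sub_vecMul, ← hz, sub_sub_cancel]
    obtain ⟨w, c, hwc⟩ := exists_eq_smul_add_const (p := 3) (by decide) hV
      fun T => ⟨z T, congrFun hdiff T⟩
    have hz' : z = w ᵥ* inclusionMatrix ℤ V 2 3 + c • 1 := by
      refine smul_right_injective _ (three_ne_zero : (3 : ℤ) ≠ 0) ?_
      dsimp only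
      rw [← hdiff, hwc, add_vecMul, smul_vecMul, smul_vecMul, smul_add, smul_comm (3 : ℤ) c,
        one_vecMul]
      rfl
    refine ⟨w, c, fun S => ?_⟩
    have h := congrFun hwc S
    rw [Pi.sub_apply, hz', inclusionMatrix_mulVec_vecMul_add_smul_one (by lia)] at h
    simp only [Pi.add_apply, Pi.smul_apply, Pi.one_apply, smul_eq_mul, Nat.cast_ofNat] at h
    linear_combination -h
  · rintro ⟨w, c, hy⟩
    refine ⟨w ᵥ* inclusionMatrix ℤ V 2 3 + c • 1, ?_⟩
    have hz : inclusionMatrix ℤ V 2 3 *ᵥ (w ᵥ* inclusionMatrix ℤ V 2 3 + c • 1) =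
        y + (3 : ℤ) • w + c • 1 := by
      ext S
      rw [inclusionMatrix_mulVec_vecMul_add_smul_one (by lia), Pi.add_apply, Pi.add_apply, hy]
      simp only [Pi.smul_apply, Pi.one_apply, smul_eq_mul]
      ring
    rw [hz, add_vecMul, add_vecMul, smul_vecMul, smul_vecMul, one_vecMul, smul_add,
      smul_comm (3 : ℤ) c]
    abel

theorem vecMul_inclusionMatrix_zmod_three_eq_zero_iff (hV : 6 ≤ Fintype.card V)
    {v : Set.powersetCard V 2 → ZMod 3} :
    v ᵥ* inclusionMatrix (ZMod 3) V 2 3 = 0 ↔ ∃ c : ZMod 3, v = c • 1 := by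
  constructor
  · intro h
    obtain ⟨S⟩ : Nonempty (Set.powersetCard V 2) := nonempty_powersetCard (by lia)
    refine ⟨v S, funext fun S' => ?_⟩
    simpa using apply_eq_of_vecMul_inclusionMatrix_eq_zero (by decide) hV h S' S
  · rintro ⟨c, rfl⟩
    rw [smul_vecMul, one_vecMul_inclusionMatrix]
    ext T
    exact mul_eq_zero_of_right c rfl

theorem map_johnsonMatrix_mulVec_eq_zero_iff (hV : 6 ≤ Fintype.card V)
    {g : Set.powersetCard V 3 → ZMod 3} :
    (johnsonMatrix V).map Int.cast *ᵥ g = 0 ↔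
      ∃ c : ZMod 3, inclusionMatrix (ZMod 3) V 2 3 *ᵥ g = c • 1 := by
  have hmap : (johnsonMatrix V).map (Int.cast : ℤ → ZMod 3) =
      (inclusionMatrix (ZMod 3) V 2 3)ᵀ * inclusionMatrix (ZMod 3) V 2 3 := by
    have h := congrArg (Int.castRingHom (ZMod 3)).mapMatrix
      (johnsonMatrix_eq_transpose_mul_sub (V := V))
    have h3 : (3 : ℤ) •
        (1 : Matrix (Set.powersetCard V 3) (Set.powersetCard V 3) (ZMod 3)) = 0 := by
      ext T T'
      rw [Matrix.smul_apply, zsmul_eq_mul]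
      exact mul_eq_zero_of_left rfl _
    rwa [map_sub, map_zsmul, map_one, h3, sub_zero, RingHom.mapMatrix_apply,
      RingHom.mapMatrix_apply, Matrix.map_mul, transpose_map, map_inclusionMatrix] at h
  rw [hmap, ← mulVec_mulVec, mulVec_transpose,
    vecMul_inclusionMatrix_zmod_three_eq_zero_iff hV]

theorem eq_zero_of_inclusionMatrix_mulVec_eq_smul_one (hV : Fintype.card V % 3 = 2)
    {g : Set.powersetCard V 3 → ZMod 3} {c : ZMod 3}
    (hg : inclusionMatrix (ZMod 3) V 2 3 *ᵥ g = c • 1) : c = 0 := by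
  have hcast : (Fintype.card V : ZMod 3) = 2 := by
    rw [← Nat.mod_add_div (Fintype.card V) 3, hV]
    push_cast
    exact add_eq_left.2 (mul_eq_zero_of_left rfl _)
  have hchoose : ((Fintype.card V).choose 2 : ZMod 3) = 1 := by
    refine mul_left_cancel₀ (by decide : (2 : ZMod 3) ≠ 0) ?_
    have h := Nat.cast_descFactorial_two (ZMod 3) (Fintype.card V)
    rw [Nat.descFactorial_eq_factorial_mul_choose, Nat.cast_mul, hcast] at h
    exact h.trans (by ring)
  have hsum := sum_inclusionMatrix_mulVec 2 3 g
  rw [hg] at hsum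
  simp only [Pi.smul_apply, Pi.one_apply, sum_const, card_univ, card_powersetCard_coe,
    nsmul_eq_mul, hchoose, one_mul, smul_eq_mul, mul_one] at hsum
  rw [hsum]
  exact mul_eq_zero_of_left rfl _

theorem exists_smul_eq_pairMap (hV : 6 ≤ Fintype.card V) {y : Set.powersetCard V 2 → ℤ}
    (hy : Fintype.card V % 3 = 2 ∨ (3 : ℤ) ∣ ∑ S, y S) :
    ∃ x, (3 : ℤ) • x = pairMap V y := by
  refine exists_smul_eq_of_forall_hom_eq_zero (p := 3) fun φ => ?_
  obtain ⟨c, hc⟩ := (map_johnsonMatrix_mulVec_eq_zero_iff hV).1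
    (smithGroupHomEquiv (johnsonMatrix V) (ZMod 3) φ).2
  have hφ : φ (pairMap V y) = c * (∑ S, y S : ℤ) := by
    have hcast : (fun T => ((y ᵥ* inclusionMatrix ℤ V 2 3) T : ZMod 3)) =
        (fun S => (y S : ZMod 3)) ᵥ* inclusionMatrix (ZMod 3) V 2 3 := by
      ext T
      rw [← map_inclusionMatrix (Int.castRingHom (ZMod 3))]
      exact RingHom.map_vecMul (Int.castRingHom (ZMod 3)) _ y T
    calc φ (pairMap V y)
      _ = (fun T => ((y ᵥ* inclusionMatrix ℤ V 2 3) T : ZMod 3)) ⬝ᵥ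
          (smithGroupHomEquiv (johnsonMatrix V) (ZMod 3) φ).1 := hom_smithGroup_apply_mk _ φ _
      _ = c * (∑ S, y S : ℤ) := by
        rw [hcast, ← dotProduct_mulVec, hc, dotProduct_smul, dotProduct_one, Int.cast_sum,
          smul_eq_mul]
  rw [hφ]
  rcases hy with hn | hsum
  · rw [eq_zero_of_inclusionMatrix_mulVec_eq_smul_one hn hc, zero_mul]
  · rw [(ZMod.intCast_zmod_eq_zero_iff_dvd _ 3).2 hsum, mul_zero]

theorem range_pairMap_comp_fst {M : Type*} [AddCommGroup M] (hV : 6 ≤ Fintype.card V)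
    {L : Submodule ℤ ((Set.powersetCard V 2 → ℤ) × M)}
    (hL : ∀ y, (∃ w, (y, w) ∈ L) ↔ Fintype.card V % 3 = 2 ∨ (3 : ℤ) ∣ ∑ S, y S) :
    LinearMap.range (pairMap V ∘ₗ LinearMap.fst ℤ _ M ∘ₗ L.subtype) =
      LinearMap.range (LinearMap.lsmul ℤ _ (3 : ℤ)) := by
  refine le_antisymm ?_ ?_
  · rintro _ ⟨⟨⟨y, w⟩, hy⟩, rfl⟩
    exact exists_smul_eq_pairMap hV ((hL y).1 ⟨w, hy⟩)
  · rintro _ ⟨x, rfl⟩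
    obtain ⟨z, rfl⟩ := Submodule.Quotient.mk_surjective _ x
    obtain ⟨w, hw⟩ := (hL (inclusionMatrix ℤ V 2 3 *ᵥ z)).2
      (.inr ⟨_, sum_inclusionMatrix_mulVec 2 3 z⟩)
    exact ⟨⟨_, hw⟩, pairMap_inclusionMatrix_mulVec z⟩

theorem finrank_ker_inclusionMatrix (hV : 6 ≤ Fintype.card V) :
    Module.finrank (ZMod 3) (LinearMap.ker (inclusionMatrix (ZMod 3) V 2 3).mulVecLin) =
      (Fintype.card V).choose 3 + 1 - (Fintype.card V).choose 2 := by
  have hker : LinearMap.ker (inclusionMatrix (ZMod 3) V 2 3).vecMulLinear =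
      ZMod 3 ∙ (1 : Set.powersetCard V 2 → ZMod 3) := by
    ext v
    rw [LinearMap.mem_ker, vecMulLinear_apply, Submodule.mem_span_singleton,
      vecMul_inclusionMatrix_zmod_three_eq_zero_iff hV]
    simp only [eq_comm]
  have : Nonempty (Set.powersetCard V 2) := nonempty_powersetCard (by lia)
  have h := finrank_ker_mulVecLin_add_card (inclusionMatrix (ZMod 3) V 2 3)
  rw [hker, finrank_span_singleton one_ne_zero, card_powersetCard_coe, card_powersetCard_coe] at h
  lia

theorem finrank_range_inclusionMatrix_inf_span_one (hV : 6 ≤ Fintype.card V) :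
    Module.finrank (ZMod 3) (LinearMap.range (inclusionMatrix (ZMod 3) V 2 3).mulVecLin ⊓
        ZMod 3 ∙ (1 : Set.powersetCard V 2 → ZMod 3) : Submodule (ZMod 3) _) =
      if Fintype.card V % 3 = 2 then 0 else 1 := by
  split_ifs with hmod
  · suffices (LinearMap.range (inclusionMatrix (ZMod 3) V 2 3).mulVecLin ⊓
        ZMod 3 ∙ (1 : Set.powersetCard V 2 → ZMod 3)) = ⊥ by rw [this, finrank_bot]
    rw [eq_bot_iff]
    rintro _ ⟨⟨g, hg⟩, hc⟩
    obtain ⟨c, rfl⟩ := Submodule.mem_span_singleton.1 hc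
    rw [eq_zero_of_inclusionMatrix_mulVec_eq_smul_one hmod hg, zero_smul]
    exact zero_mem _
  · have hne : ((Fintype.card V - 2 : ℕ) : ZMod 3) ≠ 0 := by
      rw [Ne, ZMod.natCast_eq_zero_iff]
      lia
    have : Nonempty (Set.powersetCard V 2) := nonempty_powersetCard (by lia)
    rw [inf_eq_right.2, finrank_span_singleton one_ne_zero]
    rw [Submodule.span_singleton_le_iff_mem]
    refine ⟨((Fintype.card V - 2 : ℕ) : ZMod 3)⁻¹ • 1, ?_⟩
    rw [map_smul, mulVecLin_apply, inclusionMatrix_mulVec_one (by norm_num), Nat.choose_one_right]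
    ext S
    simp [hne]

theorem card_hom_smithGroup_johnsonMatrix (hV : 6 ≤ Fintype.card V) :
    Nat.card (SmithGroup (johnsonMatrix V) →ₗ[ℤ] ZMod 3) =
      3 ^ ((Fintype.card V).choose 3 + 1 - (Fintype.card V).choose 2) *
        (if Fintype.card V % 3 = 2 then 1 else 3) := by
  let D := (inclusionMatrix (ZMod 3) V 2 3).mulVecLin
  have hcomap (g) : (johnsonMatrix V).map Int.cast *ᵥ g = 0 ↔
      g ∈ (ZMod 3 ∙ (1 : Set.powersetCard V 2 → ZMod 3)).comap D := by
    rw [map_johnsonMatrix_mulVec_eq_zero_iff hV, Submodule.mem_comap, Submodule.mem_span_singleton]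
    simp only [eq_comm, D, mulVecLin_apply]
  calc Nat.card (SmithGroup (johnsonMatrix V) →ₗ[ℤ] ZMod 3)
    _ = Nat.card ((ZMod 3 ∙ (1 : Set.powersetCard V 2 → ZMod 3)).comap D) :=
      Nat.card_congr ((smithGroupHomEquiv _ _).trans (Equiv.subtypeEquivRight hcomap))
    _ = _ := by
      rw [Module.natCard_eq_pow_finrank (K := ZMod 3), Nat.card_zmod, finrank_comap_eq, pow_add,
        finrank_ker_inclusionMatrix hV, finrank_range_inclusionMatrix_inf_span_one hV]
      split_ifs <;> rfl

end JohnsonMatrix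

section PairChart

open Finset

variable {α W : Type*}

/-- The pair `{none, some a}`. -/
noncomputable def nonePair (a : α) : Set.powersetCard (Option α) 2 :=
  ⟨{none, some a}, card_pair (Option.some_ne_none a).symm⟩

/-- A pair of elements of `α`, regarded as a pair of elements of `Option α`. -/
abbrev somePair : Set.powersetCard α 2 → Set.powersetCard (Option α) 2 :=
  Set.powersetCard.map 2 Function.Embedding.some

theorem sum_elim_somePair_nonePair_bijective :
    Function.Bijective (Sum.elim somePair nonePair : Set.powersetCard α 2 ⊕ α → _) := by
  constructor
  · refine Function.Injective.sumElim ?_ ?_ ?_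
    · exact fun S S' h => Subtype.ext (map_injective _ (congrArg Subtype.val h))
    · intro a b h
      have := congrArg (fun S => some a ∈ S.1) h
      simpa [nonePair] using this
    · intro S a h
      have := congrArg (fun S => none ∈ S.1) h
      exact absurd this (by simp [nonePair])
  · rintro ⟨S, hS⟩
    obtain ⟨x, y, hxy, rfl⟩ := card_eq_two.1 hS
    rcases x with _ | a <;> rcases y with _ | b
    · exact absurd rfl hxy
    · exact ⟨.inr b, rfl⟩
    · exact ⟨.inr a, Subtype.ext (pair_comm _ _)⟩
    · refine ⟨.inl ⟨{a, b}, card_pair fun h => hxy (congrArg some h)⟩, Subtype.ext ?_⟩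
      simp

/-- The pairs of `Option α` are the pairs of `α` and the pairs `{none, some a}`. -/
noncomputable def pairOptionEquiv (α : Type*) :
    Set.powersetCard α 2 ⊕ α ≃ Set.powersetCard (Option α) 2 :=
  Equiv.ofBijective _ sum_elim_somePair_nonePair_bijective

theorem sum_pair_option [Fintype α] {M : Type*} [AddCommMonoid M]
    (F : Set.powersetCard (Option α) 2 → M) :
    ∑ S, F S = ∑ S, F (somePair S) + ∑ a, F (nonePair a) := by
  rw [← (pairOptionEquiv α).sum_comp, Fintype.sum_sum_type]
  rfl

theorem exists_apply_somePair_apply_nonePair (F : Set.powersetCard α 2 → ℤ) (g : α → ℤ) :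
    ∃ y : Set.powersetCard (Option α) 2 → ℤ,
      (∀ S, y (somePair S) = F S) ∧ ∀ a, y (nonePair a) = g a := by
  refine ⟨Sum.elim F g ∘ (pairOptionEquiv α).symm, fun S => ?_, fun a => ?_⟩
  · exact congrArg (Sum.elim F g) ((pairOptionEquiv α).symm_apply_apply (.inl S))
  · exact congrArg (Sum.elim F g) ((pairOptionEquiv α).symm_apply_apply (.inr a))

theorem sum_nonePair (f : Option α → ℤ) (a : α) :
    ∑ b ∈ (nonePair a : Finset (Option α)), f b = f none + f (some a) :=
  sum_pair (Option.some_ne_none a).symm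

variable [Fintype α] [Fintype W]

theorem pairDegree_none (y : Set.powersetCard (Option α) 2 → ℤ) :
    pairDegree y none = ∑ a, y (nonePair a) := by
  rw [pairDegree, sum_pair_option]
  simp [nonePair]

theorem pairDegree_some (y : Set.powersetCard (Option α) 2 → ℤ) (a : α) :
    pairDegree y (some a) = y (nonePair a) + pairDegree (fun S => y (somePair S)) a := by
  rw [pairDegree, sum_pair_option, add_comm]
  simp [nonePair, pairDegree, eq_comm]

theorem pairDegree_add (y z : Set.powersetCard α 2 → ℤ) (a : α) :
    pairDegree (y + z) a = pairDegree y a + pairDegree z a := by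
  simp_rw [pairDegree, ← sum_add_distrib, Pi.add_apply, ite_add_zero]

theorem pairDegree_smul (c : ℤ) (y : Set.powersetCard α 2 → ℤ) (a : α) :
    pairDegree (c • y) a = c * pairDegree y a := by
  simp_rw [pairDegree, mul_sum, Pi.smul_apply, smul_eq_mul, mul_ite, mul_zero]

/-- Coordinates on the functions `y` on the pairs of `Option (Option W)`, with the two added points
written `∞ = none` and `0 = some none`: the values of `y` at the pairs `{∞, j}`, the degrees of `y`
at the points `j` and `∞`, and, at a pair `e` of `W`, the difference
`y e - ∑ j ∈ e, y {∞, j}`. -/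
noncomputable def pairChart (W : Type*) [Fintype W] :
    (Set.powersetCard (Option (Option W)) 2 → ℤ) →ₗ[ℤ]
      (Set.powersetCard W 2 → ℤ) × (W → ℤ) × (W → ℤ) × ℤ where
  toFun y := (fun e => y (somePair (somePair e)) - ∑ j ∈ (e : Finset W), y (nonePair (some j)),
    fun j => y (nonePair (some j)), fun j => pairDegree y (some (some j)), pairDegree y none)
  map_add' y z := by
    ext <;> simp only [Pi.add_apply, sum_add_distrib, pairDegree_add, Prod.mk_add_mk]
    ring
  map_smul' c y := by
    ext <;> simp only [Pi.smul_apply, pairDegree_smul, Prod.smul_mk, smul_eq_mul, ← mul_sum,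
      ← mul_sub, RingHom.id_apply]

theorem pairChart_injective : Function.Injective (pairChart W) := by
  refine (injective_iff_map_eq_zero _).2 fun y hy => ?_
  obtain ⟨hh, hx, hu, hs⟩ : _ ∧ _ ∧ _ ∧ _ := by simpa only [Prod.ext_iff] using hy
  have hinf (j) : y (nonePair (some j)) = 0 := congrFun hx j
  have hrest (e) : y (somePair (somePair e)) = 0 := by
    simpa [pairChart, hinf] using congrFun hh e
  have hdeg (j : W) : pairDegree (fun _ => (0 : ℤ)) j = 0 := by simp [pairDegree]
  have hzero (j) : y (somePair (nonePair j)) = 0 := by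
    simpa [pairChart, pairDegree_some, hinf, hrest, hdeg] using congrFun hu j
  have hinf_zero : y (nonePair none) = 0 := by
    simpa [pairChart, pairDegree_none, hinf] using hs
  ext S
  obtain ⟨S | _ | j, rfl⟩ := (pairOptionEquiv _).surjective S
  · obtain ⟨e | j, rfl⟩ := (pairOptionEquiv _).surjective S
    exacts [hrest e, hzero j]
  exacts [hinf_zero, hinf j]

theorem pairChart_surjective : Function.Surjective (pairChart W) := by
  rintro ⟨h, x, u, s⟩
  let rest (e : Set.powersetCard W 2) : ℤ := h e + ∑ j ∈ (e : Finset W), x j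
  obtain ⟨y₀, hrest, hzero⟩ := exists_apply_somePair_apply_nonePair rest
    fun j => u j - x j - pairDegree rest j
  obtain ⟨y, hy₀, hinf⟩ := exists_apply_somePair_apply_nonePair y₀
    fun a => a.elim (s - ∑ j, x j) x
  refine ⟨y, ?_⟩
  ext <;> simp [pairChart, pairDegree_none, pairDegree_some, hinf, hy₀, hzero, hrest, rest]

theorem card_filter_mem_pair (a : α) :
    (#{S : Set.powersetCard α 2 | a ∈ (S : Finset α)} : ℤ) = Fintype.card α - 1 := by
  have h := card_filter_subset_coe 2 {a}
  simp only [singleton_subset_iff, card_singleton, Nat.choose_one_right, Nat.one_le_ofNat,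
    if_true, Nat.add_one_sub_one] at h
  rw [h, Nat.cast_pred (Fintype.card_pos_iff.2 ⟨a⟩)]

theorem pairDegree_one (a : α) :
    pairDegree (1 : Set.powersetCard α 2 → ℤ) a = Fintype.card α - 1 := by
  simp_rw [pairDegree, Pi.one_apply, sum_boole, card_filter_mem_pair]

theorem sum_pair_sum_mem (f : α → ℤ) :
    ∑ S : Set.powersetCard α 2, ∑ a ∈ (S : Finset α), f a = (Fintype.card α - 1) * ∑ a, f a := by
  calc ∑ S : Set.powersetCard α 2, ∑ a ∈ (S : Finset α), f a
    _ = ∑ S : Set.powersetCard α 2, ∑ a, if a ∈ (S : Finset α) then f a else 0 := by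
      simp_rw [Fintype.sum_ite_mem]
    _ = ∑ a, (#{S : Set.powersetCard α 2 | a ∈ (S : Finset α)} : ℤ) * f a := by
      rw [sum_comm]
      refine sum_congr rfl fun a _ => ?_
      rw [← sum_filter, sum_const, nsmul_eq_mul]
    _ = (Fintype.card α - 1) * ∑ a, f a := by simp_rw [card_filter_mem_pair, mul_sum]

theorem pairDegree_sum_mem (f : α → ℤ) (a : α) :
    pairDegree (fun S => ∑ b ∈ (S : Finset α), f b) a = (Fintype.card α - 2) * f a + ∑ b, f b := by
  have hcount (b : α) :
      (#{S : Set.powersetCard α 2 | a ∈ (S : Finset α) ∧ b ∈ (S : Finset α)} : ℤ) =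
        (Fintype.card α - 2) * (if a = b then 1 else 0) + 1 := by
    have h := card_filter_subset_coe 2 {a, b}
    simp only [insert_subset_iff, singleton_subset_iff, card_le_two, if_true] at h
    rw [h]
    split_ifs with hab
    · subst hab
      have := Nat.cast_pred (R := ℤ) (Fintype.card_pos_iff.2 ⟨a⟩)
      simp only [mem_singleton, insert_eq_of_mem, card_singleton, Nat.add_one_sub_one,
        Nat.choose_one_right, this]
      ring
    · simp [card_pair hab]
  calc pairDegree (fun S => ∑ b ∈ (S : Finset α), f b) a
    _ = ∑ S : Set.powersetCard α 2,
        ∑ b, if a ∈ (S : Finset α) ∧ b ∈ (S : Finset α) then f b else 0 := by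
      simp_rw [pairDegree, ite_and, ← Fintype.sum_ite_mem _ f, sum_ite_irrel, sum_const_zero]
    _ = ∑ b, (#{S : Set.powersetCard α 2 | a ∈ (S : Finset α) ∧ b ∈ (S : Finset α)} : ℤ) * f b := by
      rw [sum_comm]
      refine sum_congr rfl fun b _ => ?_
      rw [← sum_filter, sum_const, nsmul_eq_mul]
    _ = (Fintype.card α - 2) * f a + ∑ b, f b := by
      simp_rw [hcount, add_mul, one_mul, sum_add_distrib, mul_assoc, ← mul_sum, ite_mul, one_mul,
        zero_mul, Fintype.sum_ite_eq]

theorem sum_eq_of_pairChart_eq {y : Set.powersetCard (Option (Option W)) 2 → ℤ}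
    {h : Set.powersetCard W 2 → ℤ} {x u : W → ℤ} {s : ℤ} (hy : pairChart W y = (h, x, u, s)) :
    ∑ S, y S = s + ∑ j, u j - ∑ e, h e - Fintype.card W * ∑ j, x j := by
  simp only [pairChart, LinearMap.coe_mk, AddHom.coe_mk, Prod.mk.injEq] at hy
  obtain ⟨rfl, rfl, rfl, rfl⟩ := hy
  simp_rw [pairDegree_some, pairDegree_none, sum_pair_option, sum_add_distrib, sum_sub_distrib,
    sum_pair_sum_mem, sum_pairDegree, Fintype.sum_option]
  ring

/-- The relations defining the kernel of `pairMap`, in the coordinates of `pairChart`. Here `i + 7`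
is the number of points of the Johnson graph. -/
def IsPairRelation (i : ℤ) {E J : Type*} [Fintype E] [Fintype J]
    (h : E → ℤ) (x u : J → ℤ) (s : ℤ) : Prop :=
  ∃ (h' : E → ℤ) (x' u' : J → ℤ) (s' γ : ℤ),
    (∀ e, h e = i * h' e - 2 * s' - (i + 4) * γ) ∧
    (∀ j, x j = i * x' j + s' + u' j + (i + 4) * γ) ∧
    (∀ j, u j = (2 * i + 5) * u' j + 2 * (s' + ∑ j, u' j - ∑ e, h' e - (i + 5) * ∑ j, x' j) +
      (i + 4) * γ * (i + 6)) ∧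
    s = (2 * i + 5) * s' + 2 * (s' + ∑ j, u' j - ∑ e, h' e - (i + 5) * ∑ j, x' j) +
      (i + 4) * γ * (i + 6)

theorem pairDegree_smul_add_sum_pairDegree_add_const (w : Set.powersetCard α 2 → ℤ) (b c : ℤ)
    (a : α) :
    pairDegree (fun S => b * w S + ∑ a ∈ (S : Finset α), pairDegree w a + c) a =
      (b + Fintype.card α - 2) * pairDegree w a + 2 * ∑ S, w S + c * (Fintype.card α - 1) := by
  have hfun : (fun S => b * w S + ∑ a ∈ (S : Finset α), pairDegree w a + c) =
      b • w + (fun S : Set.powersetCard α 2 => ∑ a ∈ (S : Finset α), pairDegree w a) + c • 1 := by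
    ext S
    simp
  rw [hfun, pairDegree_add, pairDegree_add, pairDegree_smul, pairDegree_smul, pairDegree_sum_mem,
    pairDegree_one, sum_pairDegree]
  ring

theorem pairChart_smul_add_sum_pairDegree_add_const {i : ℕ} (hW : Fintype.card W = i + 5)
    {w : Set.powersetCard (Option (Option W)) 2 → ℤ} {h : Set.powersetCard W 2 → ℤ} {x u : W → ℤ}
    {s : ℤ} (hw : pairChart W w = (h, x, u, s)) (c : ℤ) :
    pairChart W (fun S => i * w S + ∑ a ∈ (S : Finset (Option (Option W))), pairDegree w a + c) =
      (fun e => i * h e - 2 * s - c, fun j => i * x j + s + u j + c,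
        fun j => (2 * i + 5) * u j + 2 * (s + ∑ j, u j - ∑ e, h e - (i + 5) * ∑ j, x j) +
          c * (i + 6),
        (2 * i + 5) * s + 2 * (s + ∑ j, u j - ∑ e, h e - (i + 5) * ∑ j, x j) + c * (i + 6)) := by
  have hV : (Fintype.card (Option (Option W)) : ℤ) = i + 7 := by
    rw [Fintype.card_option, Fintype.card_option, hW]
    push_cast
    ring
  have hWcast : (Fintype.card W : ℤ) = i + 5 := by rw [hW]; norm_cast
  have hsum := sum_eq_of_pairChart_eq hw
  rw [hWcast] at hsum
  simp only [pairChart, LinearMap.coe_mk, AddHom.coe_mk, Prod.mk.injEq] at hw ⊢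
  obtain ⟨rfl, rfl, rfl, rfl⟩ := hw
  simp_rw [pairDegree_smul_add_sum_pairDegree_add_const, hsum, hV]
  refine ⟨funext fun e => ?_, funext fun j => ?_, funext fun j => by ring, by ring⟩
  · simp only [sum_add_distrib, sum_nonePair, sum_const, Set.powersetCard.card_eq, ← mul_sum,
      Set.powersetCard.val_map, sum_map, Function.Embedding.some_apply, nsmul_eq_mul]
    push_cast
    ring
  · rw [sum_nonePair]
    ring

theorem pairMap_eq_zero_iff_isPairRelation {i : ℕ} (hW : Fintype.card W = i + 5)
    {y : Set.powersetCard (Option (Option W)) 2 → ℤ}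
    {h : Set.powersetCard W 2 → ℤ} {x u : W → ℤ} {s : ℤ} (hy : pairChart W y = (h, x, u, s)) :
    pairMap (Option (Option W)) y = 0 ↔ IsPairRelation i h x u s := by
  have hV : Fintype.card (Option (Option W)) = i + 7 := by simp [hW]
  have hcoe (a b : ℤ) : a + b * (Fintype.card (Option (Option W)) - 3) = a + (i + 4) * b := by
    rw [hV]
    push_cast
    ring
  have hcoe' : (Fintype.card (Option (Option W)) : ℤ) - 7 = i := by simp [hV]
  simp_rw [pairMap_eq_zero_iff (y := y) (by lia), hcoe, hcoe', ← funext_iff (f := y)]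
  constructor
  · rintro ⟨w, c, hwc⟩
    have hchart := pairChart_smul_add_sum_pairDegree_add_const hW (w := w) rfl ((i + 4) * c)
    rw [← hwc, hy] at hchart
    simp only [Prod.mk.injEq] at hchart
    obtain ⟨hh, hx, hu, hs⟩ := hchart
    exact ⟨_, _, _, _, c, congrFun hh, congrFun hx, congrFun hu, hs⟩
  · rintro ⟨h', x', u', s', c, hh, hx, hu, hs⟩
    obtain ⟨w, hw⟩ := pairChart_surjective (h', x', u', s')
    refine ⟨w, c, pairChart_injective ?_⟩
    rw [pairChart_smul_add_sum_pairDegree_add_const hW hw, hy, ← funext hh, ← funext hx,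
      ← funext hu, ← hs]

end PairChart

section RelationInvariants

variable {κ J : Type*} [Fintype κ] [Fintype J]

/-- Integers on which the relations `IsPairRelation i h x u s` become divisibility conditions, when
two indices `none` and `some none` are singled out in the domain of `h`. -/
def relationInvariants (i : ℤ) (κ J : Type*) [Fintype κ] [Fintype J] :
    (Option (Option κ) → ℤ) × (J → ℤ) × (J → ℤ) × ℤ →ₗ[ℤ] (κ → ℤ) × (J → ℤ) × ℤ × ℤ where
  toFun v := (fun e => v.1 (some (some e)) - v.1 none,
    fun j => (2 * i + 5) * v.2.1 j + v.2.2.2 - v.2.2.1 j + (2 * i + 5) * v.1 none,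
    -3 * v.1 none - 2 * (2 * ∑ j, v.2.1 j - v.2.2.2),
    -(∑ e, v.1 e + ∑ j, ((2 * i + 5) * v.2.1 j + v.2.2.2 - v.2.2.1 j) +
      ((2 * i + 5) * (i + 5) - (Fintype.card κ + 2)) * v.1 none))
  map_add' v w := by
    ext <;> simp only [Prod.fst_add, Prod.snd_add, Pi.add_apply, Finset.sum_add_distrib,
      Finset.sum_sub_distrib, mul_add] <;> ring
  map_smul' c v := by
    ext <;> simp only [Prod.smul_fst, Prod.smul_snd, Pi.smul_apply, smul_eq_mul, RingHom.id_apply,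
      Finset.sum_add_distrib, Finset.sum_sub_distrib, ← Finset.mul_sum, Finset.sum_const,
      nsmul_eq_mul, Finset.card_univ] <;> ring

theorem relationInvariants_surjective (i : ℤ) : Function.Surjective (relationInvariants i κ J) := by
  rintro ⟨c, c', ρ, β⟩
  let u (j : J) : ℤ := -ρ - c' j - (2 * i + 5) * ρ
  refine ⟨(fun e => e.elim (-ρ) fun e => e.elim (-β + ρ - ∑ e, (c e - ρ) - ∑ j, (-ρ - u j) +
    ((2 * i + 5) * (i + 5) - (Fintype.card κ + 2)) * ρ) fun e => c e - ρ, 0, u, -ρ), ?_⟩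
  ext <;> simp [relationInvariants, u, Fintype.sum_option] <;> ring

variable {i : ℤ} {h : Option (Option κ) → ℤ} {x u : J → ℤ} {s ρ β : ℤ} {c : κ → ℤ} {c' : J → ℤ}

theorem sum_eq_of_relationInvariants_eq (hJ : (Fintype.card J : ℤ) = i + 5)
    (hv : relationInvariants i κ J (h, x, u, s) = (c, c', ρ, β)) :
    (s + ∑ j, u j - ∑ e, h e - (i + 5) * ∑ j, x j) + (i * ρ - β) =
      3 * (i + 4) * ∑ j, x j - (3 * i + 6) * (2 * ∑ j, x j - s) +
        ((2 * i + 5) * (i + 5) - (Fintype.card κ + 2) - 3 * i) * h none := by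
  simp only [relationInvariants, LinearMap.coe_mk, AddHom.coe_mk, Prod.mk.injEq] at hv
  obtain ⟨-, -, rfl, rfl⟩ := hv
  simp only [Finset.sum_add_distrib, Finset.sum_sub_distrib, ← Finset.mul_sum, Finset.sum_const,
    nsmul_eq_mul, Finset.card_univ, hJ]
  ring

theorem three_dvd_iff_of_relationInvariants_eq (hJ : (Fintype.card J : ℤ) = i + 5)
    (hκ : 2 * (Fintype.card κ + 2 : ℤ) = (i + 5) * (i + 4))
    (hv : relationInvariants i κ J (h, x, u, s) = (c, c', ρ, β)) :
    3 ∣ s + ∑ j, u j - ∑ e, h e - (i + 5) * ∑ j, x j ↔ 3 ∣ i * ρ - β := by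
  have hM : (3 : ℤ) ∣ (2 * i + 5) * (i + 5) - (Fintype.card κ + 2) := by
    refine Int.dvd_of_dvd_mul_right_of_gcd_one (b := 2) ⟨(i + 5) * (i + 2), ?_⟩ (by norm_num)
    linear_combination -hκ
  refine Int.dvd_iff_dvd_of_dvd_add ?_
  rw [sum_eq_of_relationInvariants_eq hJ hv]
  obtain ⟨M, hM⟩ := hM
  exact ⟨(i + 4) * ∑ j, x j - (i + 2) * (2 * ∑ j, x j - s) + (M - i) * h none, by
    linear_combination h none * hM⟩

theorem dvd_relationInvariants_of_isPairRelation (hJ : (Fintype.card J : ℤ) = i + 5)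
    (hκ : 2 * (Fintype.card κ + 2 : ℤ) = (i + 5) * (i + 4)) (hrel : IsPairRelation i h x u s)
    (hv : relationInvariants i κ J (h, x, u, s) = (c, c', ρ, β)) :
    (∀ e, i ∣ c e) ∧ (∀ j, i * (2 * i + 5) ∣ c' j) ∧
      ∃ b γ, ρ = 4 * b + (i + 4) * (2 * i + 5) * γ ∧ β = i * b := by
  simp only [relationInvariants, LinearMap.coe_mk, AddHom.coe_mk, Prod.mk.injEq] at hv
  obtain ⟨rfl, rfl, rfl, rfl⟩ := hv
  obtain ⟨h', x', u', s', γ, hh, hx, hu, hs⟩ := hrel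
  refine ⟨fun e => ⟨h' (some (some e)) - h' none, ?_⟩, fun j => ⟨x' j + h' none, ?_⟩,
    -(∑ e, h' e + (2 * i + 5) * ∑ j, x' j +
      ((2 * i + 5) * (i + 5) - (Fintype.card κ + 2)) * h' none), 3 * h' none - γ, ?_, ?_⟩
  · simp only [hh]
    ring
  · simp only [hh, hx, hu, hs]
    ring
  · simp only [hh, hx, hs, Finset.sum_add_distrib, ← Finset.mul_sum, Finset.sum_const,
      nsmul_eq_mul, Finset.card_univ, hJ]
    linear_combination (-2 * h' none) * hκ
  · simp only [hh, hx, hs, hu, Finset.sum_add_distrib, Finset.sum_sub_distrib, ← Finset.mul_sum,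
      Finset.sum_const, nsmul_eq_mul, Finset.card_univ, hJ, Fintype.card_option]
    push_cast
    ring

theorem isPairRelation_of_dvd_relationInvariants (hJ : (Fintype.card J : ℤ) = i + 5)
    (hv : relationInvariants i κ J (h, x, u, s) = (c, c', ρ, β)) (hc : ∀ e, i ∣ c e)
    (hc' : ∀ j, i * (2 * i + 5) ∣ c' j) {b γ : ℤ}
    (hρ : ρ = 4 * b + (i + 4) * (2 * i + 5) * γ) (hβ : β = i * b) : IsPairRelation i h x u s := by
  simp only [relationInvariants, LinearMap.coe_mk, AddHom.coe_mk, Prod.mk.injEq] at hv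
  obtain ⟨rfl, rfl, rfl, rfl⟩ := hv
  choose C hC using hc
  choose C' hC' using hc'
  set s' : ℤ := 2 * b + (i + 4) * (i + 3) * γ + h none + (2 * ∑ j, x j - s) with hs'
  let h₀ : ℤ := -b - ∑ e, C e - (2 * i + 5) * ∑ j, C' j
  let u' (j : J) : ℤ := x j - i * C' j - s' + (i + 4) * γ
  have hnone : h none = -2 * s' + (i + 4) * γ := by
    rw [hs']
    linear_combination -hρ
  have hsome : h (some none) = i * h₀ + h none := by
    simp only [sub_eq_iff_eq_add.1 (hC _), eq_sub_of_add_eq (hC' _), Fintype.sum_option,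
      Finset.sum_add_distrib, Finset.sum_sub_distrib, ← Finset.mul_sum, Finset.sum_const,
      nsmul_eq_mul, Finset.card_univ, hJ] at hβ
    linear_combination -hβ
  have hsum : 2 * (s' + ∑ j, u' j - (h₀ + ∑ e, C e) - (i + 5) * ∑ j, C' j) =
      s - (2 * i + 5) * s' + (i + 4) * γ * (i + 6) := by
    simp only [u', h₀, Finset.sum_add_distrib, Finset.sum_sub_distrib, ← Finset.mul_sum,
      Finset.sum_const, nsmul_eq_mul, Finset.card_univ, hJ]
    linear_combination -hnone
  refine ⟨fun e => e.elim 0 fun e => e.elim h₀ C, C', u', s', -γ, ?_, fun j => ?_, fun j => ?_, ?_⟩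
  · rintro (_ | _ | e) <;> simp only [Option.elim]
    · linear_combination hnone
    · linear_combination hsome + hnone
    · linear_combination hC e + hnone
  · simp only [u']
    ring
  all_goals simp only [Fintype.sum_option, Option.elim, zero_add, hsum]
  · simp only [u']
    linear_combination (2 * i + 5) * hnone - hC' j
  · ring

theorem isPairRelation_iff (hJ : (Fintype.card J : ℤ) = i + 5)
    (hκ : 2 * (Fintype.card κ + 2 : ℤ) = (i + 5) * (i + 4))
    (hv : relationInvariants i κ J (h, x, u, s) = (c, c', ρ, β)) :
    IsPairRelation i h x u s ↔ (∀ e, i ∣ c e) ∧ (∀ j, i * (2 * i + 5) ∣ c' j) ∧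
      ∃ b γ, ρ = 4 * b + (i + 4) * (2 * i + 5) * γ ∧ β = i * b :=
  ⟨fun hrel => dvd_relationInvariants_of_isPairRelation hJ hκ hrel hv,
    fun ⟨hc, hc', _, _, hρ, hβ⟩ =>
      isPairRelation_of_dvd_relationInvariants hJ hv hc hc' hρ hβ⟩

end RelationInvariants

section ThreeSmulCast

variable {κ J K : Type*} {d₁ d₂ d₃ d₄ : ℕ}

/-- The triple of the reduction map to a product of cyclic groups, with `0` in the factors
`ZMod 3`. -/
def threeSmulCast (κ J K : Type*) (d₁ d₂ d₃ d₄ : ℕ) : (κ → ℤ) × (J → ℤ) × ℤ × ℤ →ₗ[ℤ]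
    (κ → ZMod d₁) × (J → ZMod d₂) × (K → ZMod 3) × ZMod d₃ × ZMod d₄ :=
  LinearMap.lsmul ℤ _ (3 : ℤ) ∘ₗ
    { toFun w := (fun e => w.1 e, fun j => w.2.1 j, 0, w.2.2.1, w.2.2.2)
      map_add' v w := by ext <;> simp
      map_smul' c w := by ext <;> simp }

theorem range_threeSmulCast : LinearMap.range (threeSmulCast κ J K d₁ d₂ d₃ d₄) =
    LinearMap.range (LinearMap.lsmul ℤ _ (3 : ℤ)) := by
  refine le_antisymm (LinearMap.range_comp_le_range _ _) ?_
  rintro _ ⟨⟨c, c', z, A, B⟩, rfl⟩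
  choose c₀ hc₀ using fun e => ZMod.intCast_surjective (c e)
  choose c₀' hc₀' using fun j => ZMod.intCast_surjective (c' j)
  obtain ⟨A₀, rfl⟩ := ZMod.intCast_surjective A
  obtain ⟨B₀, rfl⟩ := ZMod.intCast_surjective B
  have hz : (3 : ℤ) • z = 0 := funext fun l => ZModModule.char_nsmul_eq_zero 3 (z l)
  exact ⟨(c₀, c₀', A₀, B₀), by simp [threeSmulCast, hc₀, hc₀', hz]⟩

theorem threeSmulCast_eq_zero_iff {c : κ → ℤ} {c' : J → ℤ} {A B : ℤ} :
    threeSmulCast κ J K d₁ d₂ d₃ d₄ (c, c', A, B) = 0 ↔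
      (∀ e, (d₁ : ℤ) ∣ 3 * c e) ∧ (∀ j, (d₂ : ℤ) ∣ 3 * c' j) ∧ (d₃ : ℤ) ∣ 3 * A ∧
        (d₄ : ℤ) ∣ 3 * B := by
  simp [threeSmulCast, Prod.ext_iff, funext_iff, ← ZMod.intCast_zmod_eq_zero_iff_dvd]

theorem card_hom_pi_zmod_prod [Fintype κ] [Fintype J] [Fintype K] (h₁ : 3 ∣ d₁) (h₂ : 3 ∣ d₂)
    (h₄ : 3 ∣ d₄) :
    Nat.card ((κ → ZMod d₁) × (J → ZMod d₂) × (K → ZMod 3) × ZMod d₃ × ZMod d₄ →ₗ[ℤ] ZMod 3) =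
      3 ^ (Fintype.card κ + Fintype.card J + Fintype.card K + 1) * if 3 ∣ d₃ then 3 else 1 := by
  have : Fact (Nat.Prime 3) := ⟨Nat.prime_three⟩
  simp only [card_hom_prod, card_hom_pi, card_hom_zmod_zmod, h₁, h₂, h₄, if_true, dvd_refl,
    Finset.prod_const, Finset.card_univ]
  ring

end ThreeSmulCast

section PairInvariants

theorem isPairRelation_comp_equiv {i : ℤ} {E E' J : Type*} [Fintype E] [Fintype E'] [Fintype J]
    (ε : E' ≃ E) {h : E → ℤ} {x u : J → ℤ} {s : ℤ} :
    IsPairRelation i (h ∘ ε) x u s ↔ IsPairRelation i h x u s := by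
  constructor
  · rintro ⟨h', x', u', s', γ, hh, hrest⟩
    refine ⟨h' ∘ ε.symm, x', u', s', γ, fun e => ?_, ?_⟩
    · simpa using hh (ε.symm e)
    · simpa only [Function.comp_apply, Equiv.sum_comp] using hrest
  · rintro ⟨h', x', u', s', γ, hh, hrest⟩
    refine ⟨h' ∘ ε, x', u', s', γ, fun e => hh (ε e), ?_⟩
    simpa only [Function.comp_apply, Equiv.sum_comp] using hrest

theorem exists_pairInvariants {W κ : Type*} [Fintype W] [Fintype κ] {i : ℕ}
    (hW : Fintype.card W = i + 5) (hκ : 2 * (Fintype.card κ + 2) = (i + 5) * (i + 4)) :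
    ∃ Θ : (Set.powersetCard (Option (Option W)) 2 → ℤ) →ₗ[ℤ] (κ → ℤ) × (W → ℤ) × ℤ × ℤ,
      Function.Surjective Θ ∧ ∀ y c c' ρ β, Θ y = (c, c', ρ, β) →
        (3 ∣ ∑ S, y S ↔ 3 ∣ i * ρ - β) ∧
        (pairMap (Option (Option W)) y = 0 ↔ (∀ e, (i : ℤ) ∣ c e) ∧
          (∀ j, (i * (2 * i + 5) : ℤ) ∣ c' j) ∧
          ∃ b γ, ρ = 4 * b + (i + 4) * (2 * i + 5) * γ ∧ β = i * b) := by
  have hcard : Fintype.card (Option (Option κ)) = Fintype.card (Set.powersetCard W 2) := by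
    have h := Nat.choose_two_right (i + 5)
    rw [Nat.add_sub_assoc (by norm_num), ← hκ, Nat.mul_div_cancel_left _ two_pos] at h
    rw [card_powersetCard_coe, hW, h, Fintype.card_option, Fintype.card_option]
  let ε := Fintype.equivOfCardEq hcard
  have hJ : (Fintype.card W : ℤ) = (i : ℤ) + 5 := by rw [hW]; norm_cast
  let reindex := (LinearEquiv.funCongrLeft ℤ ℤ ε).prodCongr
    (LinearEquiv.refl ℤ ((W → ℤ) × (W → ℤ) × ℤ))
  refine ⟨relationInvariants i κ W ∘ₗ reindex.toLinearMap ∘ₗ pairChart W,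
    (relationInvariants_surjective _).comp (reindex.surjective.comp pairChart_surjective),
    fun y c c' ρ β hΘ => ?_⟩
  rcases hy : pairChart W y with ⟨h, x, u, s⟩
  have hv : relationInvariants i κ W (h ∘ ε, x, u, s) = (c, c', ρ, β) := by
    rw [← hΘ, LinearMap.comp_apply, LinearMap.comp_apply, hy]
    rfl
  constructor
  · rw [sum_eq_of_pairChart_eq hy,
      ← three_dvd_iff_of_relationInvariants_eq hJ (mod_cast hκ) hv, hJ, ← ε.sum_comp]
    rfl
  · rw [pairMap_eq_zero_iff_isPairRelation hW hy, ← isPairRelation_comp_equiv ε,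
      isPairRelation_iff hJ (mod_cast hκ) hv]

end PairInvariants

section LatticeParameters

theorem exists_eq_add_and_eq_add_iff {g q r m t a b : ℤ} (hab : q * a + r * b = 1) (A B : ℤ) :
    (∃ x y, q * A - b * B = g * q * x + g * m * y ∧ r * A + a * B = g * r * x + g * t * y) ↔
      g ∣ A ∧ g * (q * t - r * m) ∣ B := by
  constructor
  · rintro ⟨x, y, hρ, ht⟩
    exact ⟨⟨x + (a * m + b * t) * y, by linear_combination a * hρ + b * ht + (g * x - A) * hab⟩,
      y, by linear_combination q * ht - r * hρ - B * hab⟩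
  · rintro ⟨⟨x, rfl⟩, y, rfl⟩
    exact ⟨x - (a * m + b * t) * y, y, by linear_combination (g * m * y) * hab,
      by linear_combination (g * t * y) * hab⟩

theorem gcd_parameters_eq (i : ℕ) :
    Nat.gcd (3 * (i + 4) * (2 * i + 5)) (Nat.gcd (i * (i + 4) * (2 * i + 5))
      (Nat.gcd 12 (Nat.gcd (2 * (i + 7) * i) (3 * i)))) =
    Nat.gcd 4 i * if i % 3 = 1 then 1 else 3 := by
  have hmod : i ≡ i % 12 [MOD 12] := (Nat.mod_modEq i 12).symm
  have hlt : i % 12 < 12 := Nat.mod_lt i (by norm_num)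
  have hthree : i % 3 = i % 12 % 3 := (Nat.mod_mod_of_dvd i (by norm_num)).symm
  have hfour : Nat.gcd 4 i = Nat.gcd 4 (i % 12) := by
    simpa only [Nat.gcd_comm] using (hmod.of_dvd (by norm_num : 4 ∣ 12)).gcd_eq
  have hdistrib (a b c d : ℕ) : a.gcd (b.gcd (Nat.gcd 12 (c.gcd d))) =
      (a.gcd 12).gcd ((b.gcd 12).gcd ((c.gcd 12).gcd (d.gcd 12))) := by ac_rfl
  have h₁ : 3 * (i + 4) * (2 * i + 5) ≡ 3 * (i % 12 + 4) * (2 * (i % 12) + 5) [MOD 12] := by gcongr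
  have h₂ : i * (i + 4) * (2 * i + 5) ≡ i % 12 * (i % 12 + 4) * (2 * (i % 12) + 5) [MOD 12] := by
    gcongr
  have h₃ : 2 * (i + 7) * i ≡ 2 * (i % 12 + 7) * (i % 12) [MOD 12] := by gcongr
  have h₄ : 3 * i ≡ 3 * (i % 12) [MOD 12] := by gcongr
  rw [hdistrib, h₁.gcd_eq, h₂.gcd_eq, h₃.gcd_eq, h₄.gcd_eq, hfour, hthree]
  generalize i % 12 = j at hlt
  decide +revert

theorem exists_lattice_parameters (i : ℕ) :
    ∃ q r m t a b : ℤ, (Nat.gcd 4 i : ℤ) * q = 4 ∧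
      (if i % 3 = 1 then 1 else 3 : ℤ) * (Nat.gcd 4 i * r) = 3 * i ∧
      Nat.gcd 4 i * m = (i + 4) * (2 * i + 5) ∧
      (if i % 3 = 1 then 1 else 3 : ℤ) * (Nat.gcd 4 i * t) = i * ((i + 4) * (2 * i + 5)) ∧
      q * a + r * b = 1 := by
  obtain ⟨q, i₁, hcop, hq, hi₁⟩ := Nat.exists_coprime 4 i
  set g := Nat.gcd 4 i
  have hqg : (g : ℤ) * q = 4 := by exact_mod_cast (mul_comm g q).trans hq.symm
  have hig : (g : ℤ) * i₁ = i := by exact_mod_cast (mul_comm g i₁).trans hi₁.symm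
  have hm : (g : ℤ) * ((q + i₁) * (2 * i + 5)) = (i + 4) * (2 * i + 5) := by
    linear_combination (2 * i + 5 : ℤ) * (hqg + hig)
  have bezout {r : ℕ} (hr : q.Coprime r) : ∃ a b : ℤ, (q : ℤ) * a + r * b = 1 :=
    ⟨_, _, by rw [← Nat.gcd_eq_gcd_ab, hr.gcd_eq_one, Nat.cast_one]⟩
  split_ifs with hi
  · have hq3 : q.Coprime 3 := Nat.Coprime.coprime_dvd_left ⟨g, hq⟩ (by norm_num)
    obtain ⟨a, b, hab⟩ := bezout (hcop.mul_right hq3)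
    refine ⟨q, (i₁ * 3 : ℕ), _, i₁ * ((i + 4) * (2 * i + 5)), a, b, hqg, ?_, hm, ?_, hab⟩
    · push_cast
      linear_combination 3 * hig
    · linear_combination (i + 4) * (2 * i + 5) * hig
  · have hg3 : Nat.Coprime 3 g := Nat.Coprime.coprime_dvd_right (Nat.gcd_dvd_left 4 i) (by norm_num)
    have hdvd : 3 ∣ i₁ * ((i + 4) * (2 * i + 5)) := by
      refine hg3.dvd_of_dvd_mul_left ?_
      rw [← mul_assoc, mul_comm g, ← hi₁]
      obtain h | h : 3 ∣ i ∨ 3 ∣ i + 4 := by lia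
      exacts [h.mul_right _, (h.mul_right _).mul_left _]
    obtain ⟨t, ht⟩ := hdvd
    obtain ⟨a, b, hab⟩ := bezout hcop
    have htz : (3 : ℤ) * t = i₁ * ((i + 4) * (2 * i + 5)) := by exact_mod_cast ht.symm
    refine ⟨q, i₁, _, t, a, b, hqg, ?_, hm, ?_, hab⟩
    · linear_combination 3 * hig
    · linear_combination g * htz + (i + 4) * (2 * i + 5) * hig

end LatticeParameters

section ReducedInvariants

variable {W κ : Type*} {i : ℕ}

/-- A substitution in the last two coordinates `(A, B)`. With `(ρ, τ) = (q A - b B, r A + a B)`,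
which is unimodular when `q a + r b = 1`, the new coordinates are `ρ` and `i ρ - ν τ`. -/
def unimodularChart (κ W : Type*) (i ν q r a b : ℤ) :
    (κ → ℤ) × (W → ℤ) × ℤ × ℤ →ₗ[ℤ] (κ → ℤ) × (W → ℤ) × ℤ × ℤ where
  toFun w := (w.1, w.2.1, q * w.2.2.1 - b * w.2.2.2,
    i * (q * w.2.2.1 - b * w.2.2.2) - ν * (r * w.2.2.1 + a * w.2.2.2))
  map_add' v w := by
    ext <;> simp only [Prod.fst_add, Prod.snd_add, Pi.add_apply] <;> ring
  map_smul' c w := by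
    ext <;> simp only [Prod.smul_fst, Prod.smul_snd, Pi.smul_apply, smul_eq_mul,
      RingHom.id_apply] <;> ring

theorem exists_unimodularChart_eq_iff {i ν q r a b : ℤ} (hab : q * a + r * b = 1) {c : κ → ℤ}
    {c' : W → ℤ} {ρ β : ℤ} :
    (∃ w, unimodularChart κ W i ν q r a b w = (c, c', ρ, β)) ↔ ν ∣ i * ρ - β := by
  simp only [unimodularChart, LinearMap.coe_mk, AddHom.coe_mk, Prod.mk.injEq]
  constructor
  · rintro ⟨w, -, -, rfl, rfl⟩
    exact ⟨_, sub_sub_cancel _ _⟩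
  · rintro ⟨t, ht⟩
    refine ⟨(c, c', a * ρ + b * t, q * t - r * ρ), rfl, rfl, by linear_combination ρ * hab, ?_⟩
    linear_combination (i * ρ - ν * t) * hab + ht

theorem exists_reducedInvariants [Fintype W] [Fintype κ] (hW : Fintype.card W = i + 5)
    (hκ : 2 * (Fintype.card κ + 2) = (i + 5) * (i + 4)) :
    ∃ (L : Submodule ℤ ((Set.powersetCard (Option (Option W)) 2 → ℤ) ×
        ((κ → ℤ) × (W → ℤ) × ℤ × ℤ))) (D : ℤ),
      (if i % 3 = 1 then 1 else 3 : ℤ) * (Nat.gcd 4 i * D) = i * ((i + 4) * (2 * i + 5)) ∧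
      (∀ w, ∃ y, (y, w) ∈ L) ∧
      (∀ y, (∃ w, (y, w) ∈ L) ↔ i % 3 = 1 ∨ 3 ∣ ∑ S, y S) ∧
      ∀ y c c' A B, (y, c, c', A, B) ∈ L → (pairMap (Option (Option W)) y = 0 ↔
        (∀ e, (i : ℤ) ∣ c e) ∧ (∀ j, (i * (2 * i + 5) : ℤ) ∣ c' j) ∧
          (Nat.gcd 4 i : ℤ) ∣ A ∧ D ∣ B) := by
  obtain ⟨Θ, hsurj, hΘ⟩ := exists_pairInvariants hW hκ
  obtain ⟨q, r, m, t, a, b, hq, hr, hm, ht, hab⟩ := exists_lattice_parameters i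
  set ν : ℤ := if i % 3 = 1 then 1 else 3 with hν
  have hν0 : ν ≠ 0 := by split_ifs at hν <;> simp [hν]
  set g : ℤ := (Nat.gcd 4 i : ℤ)
  let Ξ := unimodularChart κ W i ν q r a b
  refine ⟨LinearMap.eqLocus (Θ ∘ₗ LinearMap.fst ℤ _ _) (Ξ ∘ₗ LinearMap.snd ℤ _ _),
    g * (q * t - r * m), ?_, fun w => hsurj (Ξ w), fun y => ?_, fun y c c' A B hy => ?_⟩
  · linear_combination g * q * ht - g * m * hr + i * ((i + 4) * (2 * i + 5)) * hq - 3 * i * hm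
  · rcases hy : Θ y with ⟨c, c', ρ, β⟩
    have hiff := exists_unimodularChart_eq_iff (i := (i : ℤ)) (ν := ν) hab (c := c) (c' := c')
      (ρ := ρ) (β := β)
    have hmem (w) : (y, w) ∈ LinearMap.eqLocus (Θ ∘ₗ LinearMap.fst ℤ _ _)
        (Ξ ∘ₗ LinearMap.snd ℤ _ _) ↔ Ξ w = Θ y := eq_comm
    simp_rw [hmem, hy, Ξ, hiff, (hΘ _ _ _ _ _ hy).1, hν]
    split_ifs with hi <;> simp [hi]
  · have hmem : Θ y = (c, c', q * A - b * B, i * (q * A - b * B) - ν * (r * A + a * B)) := hy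
    rw [(hΘ _ _ _ _ _ hmem).2, ← exists_eq_add_and_eq_add_iff hab]
    have hνsplit (x y : ℤ) : r * A + a * B = g * r * x + g * t * y ↔
       ν * (r * A + a * B) = 3 * i * x + i * ((i + 4) * (2 * i + 5)) * y := by
      rw [← mul_right_inj' hν0, ← hr, ← ht]
      ring_nf
    simp_rw [hνsplit, hq, hm]
    refine and_congr_right fun _ => and_congr_right fun _ => exists_congr fun x =>
      exists_congr fun y => and_congr_right fun hρ => ?_
    rw [hρ]
    constructor <;> intro h <;> linear_combination -h

end ReducedInvariants

section SmithGroupJohnsonMatrix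

open Matrix

variable {W κ : Type*} {i : ℕ}

theorem gcd_four_mul_dvd_three_mul_iff {X : ℕ} (hX : X = Nat.gcd 4 i * if i % 3 = 1 then 1 else 3)
    {A : ℤ} :
    (X : ℤ) ∣ 3 * A ↔ (Nat.gcd 4 i : ℤ) ∣ A := by
  subst hX
  split_ifs with hi
  · have hcop : IsCoprime (Nat.gcd 4 i : ℤ) 3 := Nat.isCoprime_iff_coprime.2
      (Nat.Coprime.coprime_dvd_left (Nat.gcd_dvd_left 4 i) (by norm_num))
    rw [mul_one]
    exact ⟨hcop.dvd_of_dvd_mul_left, fun h => h.mul_left 3⟩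
  · rw [mul_comm, Nat.cast_mul, Nat.cast_ofNat, mul_dvd_mul_iff_left three_ne_zero]

theorem three_dvd_gcd_four_mul_iff :
    3 ∣ (Nat.gcd 4 i * if i % 3 = 1 then 1 else 3) ↔ i % 3 ≠ 1 := by
  have hcop : ¬3 ∣ Nat.gcd 4 i := fun h => absurd (h.trans (Nat.gcd_dvd_left 4 i)) (by norm_num)
  split_ifs with hi <;> simp [hi, hcop]

theorem eq_three_mul_of_mul_eq {X Y : ℕ} {D : ℤ}
    (hX : X = Nat.gcd 4 i * if i % 3 = 1 then 1 else 3)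
    (hXY : X * Y = 3 * (i * ((i + 4) * (2 * i + 5))))
    (hD : (if i % 3 = 1 then 1 else 3 : ℤ) * (Nat.gcd 4 i * D) =
      i * ((i + 4) * (2 * i + 5))) : (Y : ℤ) = 3 * D := by
  have hX0 : (X : ℤ) ≠ 0 := by
    have : 0 < Nat.gcd 4 i := Nat.gcd_pos_of_pos_left i (by norm_num)
    rw [hX, Nat.cast_ne_zero]
    split_ifs <;> lia
  have hXY' : (X : ℤ) * Y = 3 * (i * ((i + 4) * (2 * i + 5))) := by exact_mod_cast hXY
  refine mul_left_cancel₀ hX0 ?_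
  rw [hXY', hX, ← hD]
  push_cast
  ring

theorem three_mul_dvd_three_mul_iff {d : ℕ} {a : ℤ} :
    ((3 * d : ℕ) : ℤ) ∣ 3 * a ↔ (d : ℤ) ∣ a := by
  rw [Nat.cast_mul, Nat.cast_ofNat, mul_dvd_mul_iff_left three_ne_zero]

theorem nonempty_smithGroup_johnsonMatrix_linearEquiv [Fintype W] [Fintype κ] {K : Type*}
    [Fintype K] {X Y : ℕ} (hW : Fintype.card W = i + 5)
    (hκ : 2 * (Fintype.card κ + 2) = (i + 5) * (i + 4))
    (hK : Fintype.card κ + (i + 5) + Fintype.card K + (i + 7).choose 2 = (i + 7).choose 3)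
    (hX : X = Nat.gcd 4 i * if i % 3 = 1 then 1 else 3)
    (hXY : X * Y = 3 * (i * ((i + 4) * (2 * i + 5)))) :
    Nonempty (SmithGroup (johnsonMatrix (Option (Option W))) ≃ₗ[ℤ]
      (κ → ZMod (3 * i)) × (W → ZMod (3 * (2 * i + 5) * i)) × (K → ZMod 3) × ZMod X × ZMod Y) := by
  have hV : Fintype.card (Option (Option W)) = i + 7 := by simp [hW]
  obtain ⟨L, D, hD, hsnd, hfst, hker⟩ := exists_reducedInvariants hW hκ
  have hY : (Y : ℤ) = 3 * D := eq_three_mul_of_mul_eq hX hXY hD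
  have : Fact (Nat.Prime 3) := ⟨Nat.prime_three⟩
  have (d : ℕ) : Module.Finite ℤ (ZMod d) :=
    .of_surjective (Int.castAddHom (ZMod d)).toIntLinearMap ZMod.intCast_surjective
  refine nonempty_linearEquiv_of_ker_eq_ker (p := 3)
    (pairMap (Option (Option W)) ∘ₗ LinearMap.fst ℤ _ _ ∘ₗ L.subtype)
    (threeSmulCast κ W K (3 * i) (3 * (2 * i + 5) * i) X Y ∘ₗ LinearMap.snd ℤ _ _ ∘ₗ L.subtype)
    ?_ ?_ ?_ ?_
  · refine range_pairMap_comp_fst (by lia) fun y => (hfst y).trans (or_congr_left ?_)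
    lia
  · have hsurj : LinearMap.range (LinearMap.snd ℤ _ _ ∘ₗ L.subtype) = ⊤ :=
      LinearMap.range_eq_top.2 fun w => (hsnd w).elim fun y hy => ⟨⟨(y, w), hy⟩, rfl⟩
    rw [LinearMap.range_comp_of_range_eq_top _ hsurj, range_threeSmulCast]
    rfl
  · ext ⟨⟨y, c, c', A, B⟩, hy⟩
    refine (hker _ _ _ _ _ hy).trans (Iff.trans ?_ threeSmulCast_eq_zero_iff.symm)
    simp_rw [gcd_four_mul_dvd_three_mul_iff hX, hY, mul_assoc 3 (2 * i + 5) i,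
      three_mul_dvd_three_mul_iff, mul_dvd_mul_iff_left (three_ne_zero : (3 : ℤ) ≠ 0)]
    push_cast [mul_comm (2 * i + 5) i]
    rfl
  · have hY3 : 3 ∣ Y := Int.natCast_dvd_natCast.1 ⟨D, hY⟩
    have hexp : (i + 7).choose 3 + 1 - (i + 7).choose 2 =
      Fintype.card κ + Fintype.card W + Fintype.card K + 1 := by lia
    rw [card_hom_smithGroup_johnsonMatrix (by lia),
      card_hom_pi_zmod_prod ⟨i, rfl⟩ ((dvd_mul_right 3 _).mul_right i) hY3, hX, hV, hexp]
    simp only [three_dvd_gcd_four_mul_iff, ne_eq, ite_not]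
    congr 2
    exact propext (by lia)

end SmithGroupJohnsonMatrix

section Binomial

theorem two_mul_choose_two_sub_add_two (i : ℕ) :
    2 * ((i + 7).choose 2 - 2 * (i + 7) + 1 + 2) = (i + 5) * (i + 4) := by
  have h := Nat.add_one_mul_choose_eq (i + 6) 1
  rw [Nat.choose_one_right] at h
  lia

theorem choose_three_sub_two_mul_choose_two_nonneg (i : ℕ) :
    0 ≤ ((i + 7).choose 3 : ℤ) - 2 * (i + 7).choose 2 + (i + 7 : ℕ) + 1 := by
  have h₂ := Nat.add_one_mul_choose_eq (i + 6) 1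
  have h₃ := Nat.add_one_mul_choose_eq (i + 6) 2
  have h₂' := Nat.add_one_mul_choose_eq (i + 5) 1
  rw [Nat.choose_one_right] at h₂ h₂'
  zify at h₂ h₂' h₃ ⊢
  have hsix : 6 * (((i + 7).choose 3 : ℤ) - 2 * (i + 7).choose 2 + (i + 7) + 1) =
      i ^ 3 + 12 * i ^ 2 + 35 * i + 6 := by
    linear_combination -2 * h₃ + 6 * h₂ - (i + 7) * h₂'
  have hnonneg : (0 : ℤ) ≤ i ^ 3 + 12 * i ^ 2 + 35 * i + 6 := by positivity
  rw [← hsix] at hnonneg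
  exact nonneg_of_mul_nonneg_right hnonneg (by norm_num)

end Binomial

/-- With `X = gcd(3(n−3)(2n−9), (n−7)(n−3)(2n−9), 12, 2n(n−7), 3(n−7))` and
`X·Y = 3(n−3)(n−7)(2n−9)`:
`S(A_{n,3,3,2}) ≅ (ℤ/3(n−7)ℤ)^{C(n,2)−2n+1} ⊕ (ℤ/3(2n−9)(n−7)ℤ)^{n−2}
  ⊕ (ℤ/3ℤ)^{C(n,3)−2C(n,2)+n+1} ⊕ ℤ/Xℤ ⊕ ℤ/Yℤ` (with `ℤ/0ℤ = ℤ`). -/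
theorem statement19 (n : ℕ) (hn : 7 ≤ n) (X Y : ℕ)
    (hX : X = Nat.gcd (3 * (n - 3) * (2 * n - 9))
      (Nat.gcd ((n - 7) * (n - 3) * (2 * n - 9))
        (Nat.gcd 12 (Nat.gcd (2 * n * (n - 7)) (3 * (n - 7))))))
    (hY : X * Y = 3 * (n - 3) * (n - 7) * (2 * n - 9)) :
    Nonempty (SmithGroup (interMat n 3 3 2) ≃+
      ((Fin (n.choose 2 - 2 * n + 1) → ZMod (3 * (n - 7))) ×
        (Fin (n - 2) → ZMod (3 * (2 * n - 9) * (n - 7))) ×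
        (Fin ((n.choose 3 : ℤ) - 2 * (n.choose 2 : ℤ) + (n : ℤ) + 1).toNat → ZMod 3) ×
        ZMod X × ZMod Y)) := by
  obtain ⟨i, rfl⟩ := Nat.exists_eq_add_of_le' hn
  have h₃ : i + 7 - 3 = i + 4 := rfl
  have h₉ : 2 * (i + 7) - 9 = 2 * i + 5 := by lia
  rw [h₃, h₉, Nat.add_sub_cancel] at hX hY
  rw [h₉, Nat.add_sub_cancel]
  have hκ := two_mul_choose_two_sub_add_two i
  have hK := choose_three_sub_two_mul_choose_two_nonneg i
  obtain ⟨e⟩ := nonempty_smithGroup_interMat_linearEquiv (n := i + 7)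
    (V := Option (Option (Fin (i + 5)))) (by simp)
  obtain ⟨e'⟩ := nonempty_smithGroup_johnsonMatrix_linearEquiv (W := Fin (i + 5))
    (κ := Fin ((i + 7).choose 2 - 2 * (i + 7) + 1))
    (K := Fin ((i + 7).choose 3 - 2 * (i + 7).choose 2 + (i + 7 : ℕ) + 1 : ℤ).toNat)
    (Fintype.card_fin _) (by rwa [Fintype.card_fin]) (by simp only [Fintype.card_fin]; lia)
    (hX.trans (gcd_parameters_eq i)) (hY.trans (by ring))
  exact ⟨(e.trans e').toAddEquiv⟩
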